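/- arXiv:1506.06377 — 3 statements merged into one kernel-verified Lean document; each statement's English description precedes it below -/
import Mathlib

section
/- For any two states ω¹, ω² of a finite-dimensional tripartite system ABC with ε = ½‖ω¹−ω²‖₁ < 1, the conditional mutual information satisfies |I(A:C|B)_{ω¹} − I(A:C|B)_{ω²}| ≤ 2ε log(dim H_A) + 4(1+ε)·h₂(ε/(1+ε)). -/
open Matrix
open scoped ComplexOrder

noncomputable section

/-- The von Neumann entropy, extended to the cone of positive trace-class operators by
`H(ρ) = Tr η(ρ) − η(Tr ρ)` with `η(x) = −x log x` (computed spectrally). -/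
def vnEnt {n : Type*} [Fintype n] [DecidableEq n] (ρ : Matrix n n ℂ) : ℝ :=
  if h : ρ.IsHermitian then
    (∑ i, Real.negMulLog (h.eigenvalues i)) - Real.negMulLog (∑ i, h.eigenvalues i)
  else 0

/-- A state (density operator): positive semidefinite with unit trace. -/
def IsState {n : Type*} [Fintype n] (ρ : Matrix n n ℂ) : Prop :=
  ρ.PosSemidef ∧ ρ.trace = 1

section Tripartite

variable {a b c : Type*} [Fintype a] [DecidableEq a] [Fintype b] [DecidableEq b]
  [Fintype c] [DecidableEq c]

/-- Marginal `ω_A` of a tripartite operator. -/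
def mA (ω : Matrix (a × b × c) (a × b × c) ℂ) : Matrix a a ℂ :=
  Matrix.of fun i j => ∑ k : b × c, ω (i, k) (j, k)

/-- Marginal `ω_B`. -/
def mB (ω : Matrix (a × b × c) (a × b × c) ℂ) : Matrix b b ℂ :=
  Matrix.of fun i j => ∑ k : a, ∑ l : c, ω (k, i, l) (k, j, l)

/-- Marginal `ω_C`. -/
def mC (ω : Matrix (a × b × c) (a × b × c) ℂ) : Matrix c c ℂ :=
  Matrix.of fun i j => ∑ k : a, ∑ l : b, ω (k, l, i) (k, l, j)

/-- Marginal `ω_AB`. -/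
def mAB (ω : Matrix (a × b × c) (a × b × c) ℂ) : Matrix (a × b) (a × b) ℂ :=
  Matrix.of fun p q => ∑ k : c, ω (p.1, p.2, k) (q.1, q.2, k)

/-- Marginal `ω_BC`. -/
def mBC (ω : Matrix (a × b × c) (a × b × c) ℂ) : Matrix (b × c) (b × c) ℂ :=
  Matrix.of fun p q => ∑ k : a, ω (k, p) (k, q)

/-- Marginal `ω_AC`. -/
def mAC (ω : Matrix (a × b × c) (a × b × c) ℂ) : Matrix (a × c) (a × c) ℂ :=
  Matrix.of fun p q => ∑ k : b, ω (p.1, k, p.2) (q.1, k, q.2)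

/-- Conditional mutual information `I(A:C|B)_ω = H(ω_AB)+H(ω_BC)−H(ω_ABC)−H(ω_B)`. -/
def cmi (ω : Matrix (a × b × c) (a × b × c) ℂ) : ℝ :=
  vnEnt (mAB ω) + vnEnt (mBC ω) - vnEnt ω - vnEnt (mB ω)

end Tripartite

/-- The trace norm of a matrix: the sum of its singular values. -/
def traceNorm {n : Type*} [Fintype n] [DecidableEq n] (M : Matrix n n ℂ) : ℝ :=
  ∑ i, Real.sqrt ((Matrix.posSemidef_conjTranspose_mul_self M).1.eigenvalues i)

/-!
The argument is the Alicki–Fannes–Winter one. Splitting `ω₁ − ω₂` into positive and negative parts,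
both of trace `ε`, gives states `τ, τ'` with `ω₁ + ε τ' = ω₂ + ε τ`, so that `ω₁` and `ω₂` occur
with weight `1 / (1 + ε)` in one and the same mixture. Each entropy is concave, and affine up to
`h₂` of the mixing weight, hence the conditional mutual information is affine up to `2 h₂`.
Expanding it on the common mixture in two ways leaves `ε (I(τ) − I(τ'))`, at most
`2 ε log dim H_A` because `0 ≤ I ≤ 2 log dim H_A`.

Nonnegativity of `I` is strong subadditivity, obtained from the monotonicity of relative entropy
under partial traces. There `log ρ − log σ` is written as an integral of resolvents of the relative
modular operator; each resolvent term is the supremum of a quadratic functional of an operator `X`,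
and restricting `X` to the observables of a subsystem can only lower it.
-/

section SpectralCalculus

variable {n m : Type*} [Fintype m]

theorem mul_conjTranspose_self_apply_self (M : Matrix n m ℂ) (i : n) :
    (M * Mᴴ) i i = ((∑ j, ‖M i j‖ ^ 2 : ℝ) : ℂ) := by
  simp only [mul_apply, conjTranspose_apply, Complex.star_def, Complex.mul_conj',
    Complex.ofReal_sum, Complex.ofReal_pow]

theorem sum_norm_sq_row [DecidableEq n] {W : Matrix n m ℂ} (hW : W * Wᴴ = 1) (i : n) :
    ∑ j, ‖W i j‖ ^ 2 = 1 := by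
  have h := mul_conjTranspose_self_apply_self W i
  rw [hW, one_apply_eq] at h
  exact_mod_cast h.symm

variable [Fintype n] [DecidableEq n]

theorem continuousOn_real_spectrum (f : ℝ → ℝ) (A : Matrix n n ℂ) :
    ContinuousOn f (spectrum ℝ A) :=
  A.finite_real_spectrum.continuousOn f

theorem conjTranspose_mul_eigenvectorUnitary {A : Matrix n n ℂ} (hA : A.IsHermitian) :
    (hA.eigenvectorUnitary : Matrix n n ℂ)ᴴ * hA.eigenvectorUnitary = 1 :=
  Unitary.coe_star_mul_self _

theorem eigenvectorUnitary_mul_conjTranspose {A : Matrix n n ℂ} (hA : A.IsHermitian) :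
    (hA.eigenvectorUnitary : Matrix n n ℂ) * (hA.eigenvectorUnitary : Matrix n n ℂ)ᴴ = 1 :=
  Unitary.coe_mul_star_self _

theorem cfc_eq_conj_diagonal {A : Matrix n n ℂ} (hA : A.IsHermitian) (f : ℝ → ℝ) :
    cfc f A = hA.eigenvectorUnitary * diagonal (fun i => (f (hA.eigenvalues i) : ℂ))
      * (hA.eigenvectorUnitary : Matrix n n ℂ)ᴴ := by
  rw [hA.cfc_eq, IsHermitian.cfc, Unitary.conjStarAlgAut_apply]
  rfl

theorem eq_conj_diagonal {A : Matrix n n ℂ} (hA : A.IsHermitian) :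
    A = hA.eigenvectorUnitary * diagonal (fun i => (hA.eigenvalues i : ℂ))
      * (hA.eigenvectorUnitary : Matrix n n ℂ)ᴴ := by
  simpa only [cfc_id' ℝ A hA.isSelfAdjoint] using cfc_eq_conj_diagonal hA fun x => x

theorem conj_eigenvectorUnitary {A : Matrix n n ℂ} (hA : A.IsHermitian) :
    (hA.eigenvectorUnitary : Matrix n n ℂ)ᴴ * A * hA.eigenvectorUnitary
      = diagonal fun i => (hA.eigenvalues i : ℂ) := by
  have h := hA.conjStarAlgAut_star_eigenvectorUnitary
  rwa [Unitary.conjStarAlgAut_star_apply] at h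

theorem trace_cfc {A : Matrix n n ℂ} (hA : A.IsHermitian) (f : ℝ → ℝ) :
    (cfc f A).trace = ((∑ i, f (hA.eigenvalues i) : ℝ) : ℂ) := by
  rw [cfc_eq_conj_diagonal hA, trace_mul_cycle, conjTranspose_mul_eigenvectorUnitary, one_mul,
    trace_diagonal, Complex.ofReal_sum]

theorem re_trace_eq_sum_eigenvalues {A : Matrix n n ℂ} (hA : A.IsHermitian) :
    A.trace.re = ∑ i, hA.eigenvalues i := by
  rw [hA.trace_eq_sum_eigenvalues, Complex.re_sum]
  rfl

theorem cfc_apply_self {A : Matrix n n ℂ} (hA : A.IsHermitian) (f : ℝ → ℝ) (j : n) :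
    (cfc f A) j j = ((∑ i, ‖(hA.eigenvectorUnitary : Matrix n n ℂ) j i‖ ^ 2
      * f (hA.eigenvalues i) : ℝ) : ℂ) := by
  rw [cfc_eq_conj_diagonal hA, mul_apply]
  simp only [mul_diagonal, conjTranspose_apply, Complex.star_def,
    mul_right_comm _ (Complex.ofReal _), Complex.mul_conj', Complex.ofReal_sum,
    Complex.ofReal_mul, Complex.ofReal_pow]

theorem re_cfc_apply_self_le {A : Matrix n n ℂ} (hA : A.IsHermitian) {s : Set ℝ} {f : ℝ → ℝ}
    (hf : ConcaveOn ℝ s f) (hs : ∀ i, hA.eigenvalues i ∈ s) (j : n) :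
    ((cfc f A) j j).re ≤ f (A j j).re := by
  have hid : (A j j).re
      = ∑ i, ‖(hA.eigenvectorUnitary : Matrix n n ℂ) j i‖ ^ 2 * hA.eigenvalues i := by
    rw [← Complex.ofReal_re (∑ i, _), ← cfc_apply_self hA (fun x => x),
      cfc_id' ℝ A hA.isSelfAdjoint]
  rw [cfc_apply_self hA, Complex.ofReal_re, hid]
  exact hf.le_map_sum (fun i _ => sq_nonneg _)
    (sum_norm_sq_row (eigenvectorUnitary_mul_conjTranspose hA) j)
    fun i _ => hs i

theorem trace_diagonal_mul_conj_diagonal [DecidableEq m] (W : Matrix n m ℂ) (d : n → ℝ)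
    (e : m → ℝ) :
    (diagonal (fun i => (d i : ℂ)) * (W * diagonal (fun j => (e j : ℂ)) * Wᴴ)).trace
      = ((∑ i, ∑ j, ‖W i j‖ ^ 2 * (d i * e j) : ℝ) : ℂ) := by
  rw [trace, Complex.ofReal_sum]
  refine Finset.sum_congr rfl fun i _ => ?_
  rw [diag_apply, diagonal_mul, mul_apply, Finset.mul_sum, Complex.ofReal_sum]
  refine Finset.sum_congr rfl fun j _ => ?_
  rw [mul_diagonal, conjTranspose_apply, Complex.star_def]
  push_cast
  rw [← Complex.mul_conj']
  ring

/-- The transition probability `|⟨uᵢ, vⱼ⟩|²` between the eigenvectors of two Hermitian matrices. -/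
def eigenOverlap {ρ σ : Matrix n n ℂ} (hρ : ρ.IsHermitian) (hσ : σ.IsHermitian) (i j : n) : ℝ :=
  ‖((hρ.eigenvectorUnitary : Matrix n n ℂ)ᴴ * hσ.eigenvectorUnitary) i j‖ ^ 2

theorem trace_cfc_mul_cfc {ρ σ : Matrix n n ℂ} (hρ : ρ.IsHermitian) (hσ : σ.IsHermitian)
    (f g : ℝ → ℝ) :
    (cfc f ρ * cfc g σ).trace = ((∑ i, ∑ j, eigenOverlap hρ hσ i j
      * (f (hρ.eigenvalues i) * g (hσ.eigenvalues j)) : ℝ) : ℂ) := by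
  simp only [eigenOverlap]
  rw [← trace_diagonal_mul_conj_diagonal, cfc_eq_conj_diagonal hρ, cfc_eq_conj_diagonal hσ,
    conjTranspose_mul, conjTranspose_conjTranspose, Matrix.mul_assoc, Matrix.mul_assoc,
    trace_mul_comm]
  simp only [Matrix.mul_assoc]

theorem sum_roots_charpoly {A : Matrix n n ℂ} (hA : A.IsHermitian) (f : ℝ → ℝ) :
    (A.charpoly.roots.map fun z => f z.re).sum = (cfc f A).trace.re := by
  rw [trace_cfc hA, Complex.ofReal_re, hA.roots_charpoly_eq_eigenvalues, Multiset.map_map]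
  rfl

theorem trace_cfc_mul_comm [DecidableEq m] {M : Matrix n m ℂ} {N : Matrix m n ℂ}
    (hMN : (M * N).IsHermitian) (hNM : (N * M).IsHermitian) {f : ℝ → ℝ} (hf : f 0 = 0) :
    (cfc f (M * N)).trace.re = (cfc f (N * M)).trace.re := by
  have hX : ∀ k : ℕ, (Polynomial.X ^ k : Polynomial ℂ) ≠ 0 := fun k =>
    (Polynomial.monic_X_pow k).ne_zero
  have h := congrArg (fun p : Polynomial ℂ => (p.roots.map fun z => f z.re).sum)
    (charpoly_mul_comm' M N)
  beta_reduce at h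
  rw [Polynomial.roots_mul (mul_ne_zero (hX _) (charpoly_monic _).ne_zero),
    Polynomial.roots_mul (mul_ne_zero (hX _) (charpoly_monic _).ne_zero)] at h
  rw [← sum_roots_charpoly hMN, ← sum_roots_charpoly hNM]
  simpa [Multiset.map_nsmul, Multiset.sum_nsmul, hf] using h

end SpectralCalculus

section Entropy

open Real

variable {n m : Type*} [Fintype n] [DecidableEq n] [Fintype m] [DecidableEq m]

/-- The unnormalized entropy `Tr η(A)` with `η(x) = −x log x`, computed by functional calculus. It
agrees with `vnEnt` on states, but `η(Tr A)` is not subtracted. -/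
def spectralEntropy (A : Matrix n n ℂ) : ℝ :=
  (cfc negMulLog A).trace.re

theorem spectralEntropy_eq_sum {A : Matrix n n ℂ} (hA : A.IsHermitian) :
    spectralEntropy A = ∑ i, negMulLog (hA.eigenvalues i) := by
  rw [spectralEntropy, trace_cfc hA, Complex.ofReal_re]

theorem vnEnt_eq {A : Matrix n n ℂ} (hA : A.IsHermitian) :
    vnEnt A = spectralEntropy A - negMulLog A.trace.re := by
  rw [vnEnt, dif_pos hA, spectralEntropy_eq_sum hA, re_trace_eq_sum_eigenvalues hA]

theorem spectralEntropy_le_sum_diag {A : Matrix n n ℂ} (hA : A.PosSemidef) :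
    spectralEntropy A ≤ ∑ j, negMulLog (A j j).re := by
  rw [spectralEntropy, trace, Complex.re_sum]
  exact Finset.sum_le_sum fun j _ =>
    re_cfc_apply_self_le hA.1 concaveOn_negMulLog hA.eigenvalues_nonneg j

theorem spectralEntropy_conjTranspose_mul_self (M : Matrix n m ℂ) :
    spectralEntropy (Mᴴ * M) = spectralEntropy (M * Mᴴ) :=
  trace_cfc_mul_comm (isHermitian_conjTranspose_mul_self M) (isHermitian_mul_conjTranspose_self M)
    negMulLog_zero

theorem spectralEntropy_conj_unitary {A V : Matrix n n ℂ} (hA : A.IsHermitian)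
    (hV : V * Vᴴ = 1) : spectralEntropy (Vᴴ * A * V) = spectralEntropy A := by
  have hcancel : A * V * Vᴴ = A := by rw [Matrix.mul_assoc, hV, Matrix.mul_one]
  rw [Matrix.mul_assoc, spectralEntropy, trace_cfc_mul_comm _ _ negMulLog_zero, hcancel,
    spectralEntropy]
  · rw [← Matrix.mul_assoc]
    exact isHermitian_conjTranspose_mul_mul V hA
  · rwa [hcancel]

theorem spectralEntropy_le_sum_conj_diag {A V : Matrix n n ℂ} (hA : A.PosSemidef)
    (hV : V * Vᴴ = 1) : spectralEntropy A ≤ ∑ j, negMulLog ((Vᴴ * A * V) j j).re := by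
  rw [← spectralEntropy_conj_unitary hA.1 hV]
  exact spectralEntropy_le_sum_diag (hA.conjTranspose_mul_mul_same V)

theorem exists_unitary_spectralEntropy_eq {A : Matrix n n ℂ} (hA : A.IsHermitian) :
    ∃ V : Matrix n n ℂ, V * Vᴴ = 1 ∧ spectralEntropy A = ∑ j, negMulLog ((Vᴴ * A * V) j j).re := by
  refine ⟨hA.eigenvectorUnitary, eigenvectorUnitary_mul_conjTranspose hA, ?_⟩
  simp only [conj_eigenvectorUnitary, diagonal_apply_eq, Complex.ofReal_re,
    spectralEntropy_eq_sum hA]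

theorem spectralEntropy_smul {A : Matrix n n ℂ} (hA : A.IsHermitian) (r : ℝ) :
    spectralEntropy (r • A) = r * spectralEntropy A + negMulLog r * A.trace.re := by
  rw [spectralEntropy, ← cfc_comp_const_mul r negMulLog A, trace_cfc hA, Complex.ofReal_re,
    spectralEntropy_eq_sum hA, re_trace_eq_sum_eigenvalues hA]
  simp only [negMulLog_mul, Finset.sum_add_distrib, Finset.mul_sum, Finset.sum_mul,
    mul_comm (negMulLog r)]
  rw [add_comm]

theorem concaveOn_spectralEntropy :
    ConcaveOn ℝ {A : Matrix n n ℂ | A.PosSemidef} spectralEntropy := by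
  refine ⟨fun A hA B hB p q hp hq _ => (hA.smul hp).add (hB.smul hq),
    fun A hA B hB p q hp hq hpq => ?_⟩
  obtain ⟨V, hV, hC⟩ := exists_unitary_spectralEntropy_eq ((hA.smul hp).add (hB.smul hq)).1
  have diag_nonneg {X : Matrix n n ℂ} (hX : X.PosSemidef) (j : n) : 0 ≤ ((Vᴴ * X * V) j j).re :=
    (Complex.le_def.mp (hX.conjTranspose_mul_mul_same V).diag_nonneg).1
  have diag_combo (j : n) : ((Vᴴ * (p • A + q • B) * V) j j).re
      = p * ((Vᴴ * A * V) j j).re + q * ((Vᴴ * B * V) j j).re := by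
    simp [mul_add, add_mul]
  calc p • spectralEntropy A + q • spectralEntropy B
      ≤ p • ∑ j, negMulLog ((Vᴴ * A * V) j j).re + q • ∑ j, negMulLog ((Vᴴ * B * V) j j).re := by
        gcongr
        exacts [spectralEntropy_le_sum_conj_diag hA hV, spectralEntropy_le_sum_conj_diag hB hV]
    _ = ∑ j, (p • negMulLog ((Vᴴ * A * V) j j).re + q • negMulLog ((Vᴴ * B * V) j j).re) := by
        rw [Finset.sum_add_distrib, Finset.smul_sum, Finset.smul_sum]
    _ ≤ spectralEntropy (p • A + q • B) := by
        rw [hC]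
        refine Finset.sum_le_sum fun j _ => ?_
        rw [diag_combo]
        exact concaveOn_negMulLog.2 (diag_nonneg hA j) (diag_nonneg hB j) hp hq hpq

theorem exists_eq_mul_conjTranspose {A : Matrix n n ℂ} (hA : A.PosSemidef) :
    ∃ M : Matrix n n ℂ, M * Mᴴ = A ∧ Mᴴ * M = diagonal fun i => (hA.1.eigenvalues i : ℂ) := by
  set D : Matrix n n ℂ := diagonal fun i => (√(hA.1.eigenvalues i) : ℂ)
  have hDH : Dᴴ = D := by
    simp [D, diagonal_conjTranspose, Pi.star_def]
  have hDD : D * D = diagonal fun i => (hA.1.eigenvalues i : ℂ) := by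
    simp only [D, diagonal_mul_diagonal, ← Complex.ofReal_mul,
      mul_self_sqrt (hA.eigenvalues_nonneg _)]
  refine ⟨hA.1.eigenvectorUnitary * D, ?_, ?_⟩
  · rw [conjTranspose_mul, hDH, Matrix.mul_assoc, ← Matrix.mul_assoc D, hDD, ← Matrix.mul_assoc,
      ← eq_conj_diagonal]
  · rw [conjTranspose_mul, hDH, Matrix.mul_assoc, ← Matrix.mul_assoc (_ᴴ),
      conjTranspose_mul_eigenvectorUnitary, Matrix.one_mul, hDD]

theorem spectralEntropy_add_le {A B : Matrix n n ℂ} (hA : A.PosSemidef) (hB : B.PosSemidef) :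
    spectralEntropy (A + B) ≤ spectralEntropy A + spectralEntropy B := by
  obtain ⟨M, hMA, hM⟩ := exists_eq_mul_conjTranspose hA
  obtain ⟨N, hNB, hN⟩ := exists_eq_mul_conjTranspose hB
  have hAB : A + B = fromCols M N * (fromCols M N)ᴴ := by
    rw [conjTranspose_fromCols_eq_fromRows_conjTranspose, fromCols_mul_fromRows, hMA, hNB]
  calc spectralEntropy (A + B)
      = spectralEntropy ((fromCols M N)ᴴ * fromCols M N) := by
        rw [hAB, spectralEntropy_conjTranspose_mul_self]
    _ ≤ ∑ j, negMulLog (((fromCols M N)ᴴ * fromCols M N) j j).re :=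
        spectralEntropy_le_sum_diag (posSemidef_conjTranspose_mul_self _)
    _ = spectralEntropy A + spectralEntropy B := by
        rw [conjTranspose_fromCols_eq_fromRows_conjTranspose, fromRows_mul_fromCols,
          Fintype.sum_sum_type, hM, hN, spectralEntropy_eq_sum hA.1, spectralEntropy_eq_sum hB.1]
        simp only [fromBlocks_apply₁₁, fromBlocks_apply₂₂, diagonal_apply_eq, Complex.ofReal_re]

theorem sum_negMulLog_le {ι : Type*} [Fintype ι] {x : ι → ℝ} (hx : ∀ i, 0 ≤ x i) :
    ∑ i, negMulLog (x i)
      ≤ negMulLog (∑ i, x i) + (∑ i, x i) * log (Fintype.card ι) := by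
  rcases isEmpty_or_nonempty ι with _ | _
  · simp
  have hcard : (0 : ℝ) < Fintype.card ι := by exact_mod_cast Fintype.card_pos
  have jensen := concaveOn_negMulLog.le_map_sum (t := Finset.univ)
    (w := fun _ : ι => (Fintype.card ι : ℝ)⁻¹) (p := x) (fun i _ => by positivity)
    (by simp [hcard.ne']) (fun i _ => hx i)
  simp only [smul_eq_mul, ← Finset.mul_sum] at jensen
  rw [negMulLog_mul, inv_mul_le_iff₀ hcard] at jensen
  refine jensen.trans_eq ?_
  rw [negMulLog, log_inv]
  field_simp
  ring

theorem tendsto_spectralEntropy_add_smul_one {A : Matrix n n ℂ} (hA : A.IsHermitian) (r : ℝ) :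
    Filter.Tendsto (fun δ : ℝ => spectralEntropy (A + (δ * r) • 1)) (nhds 0)
      (nhds (spectralEntropy A)) := by
  have hshift (δ : ℝ) : spectralEntropy (A + (δ * r) • 1)
      = ∑ i, negMulLog (hA.eigenvalues i + δ * r) := by
    have hcfc : A + (δ * r) • 1 = cfc (fun x => x + δ * r) A := by
      rw [cfc_add_const _ _ A, cfc_id' ℝ A hA.isSelfAdjoint, Algebra.algebraMap_eq_smul_one]
    rw [hcfc, spectralEntropy, ← cfc_comp' negMulLog _ A, trace_cfc hA, Complex.ofReal_re]
  have hcont : Continuous fun δ : ℝ => ∑ i, negMulLog (hA.eigenvalues i + δ * r) := by fun_prop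
  simp only [hshift, spectralEntropy_eq_sum hA]
  simpa using hcont.tendsto 0

end Entropy

section RelativeEntropy

open Real Filter Topology

variable {n m : Type*} [Fintype n] {ρ σ : Matrix n n ℂ}

/-- The quadratic functional in `X` whose supremum is `⟨ρ^{1/2}, (L_σ R_ρ⁻¹ + t)⁻¹ ρ^{1/2}⟩`, with
`L_σ R_ρ⁻¹` the relative modular operator. -/
def modularQuadratic (ρ σ : Matrix n n ℂ) (t : ℝ) (X : Matrix n n ℂ) : ℝ :=
  2 * (ρ * X).trace.re - (σ * (X * Xᴴ)).trace.re - t * (ρ * (Xᴴ * X)).trace.re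

theorem modularQuadratic_eq_sub {X₀ : Matrix n n ℂ} {t : ℝ} (hρ : ρ.IsHermitian)
    (hσ : σ.IsHermitian) (hX₀ : σ * X₀ + t • (X₀ * ρ) = ρ) (X : Matrix n n ℂ) :
    modularQuadratic ρ σ t X = (ρ * X₀).trace.re
      - ((σ * ((X - X₀) * (X - X₀)ᴴ)).trace.re + t * (ρ * ((X - X₀)ᴴ * (X - X₀))).trace.re) := by
  have hX₀' : X₀ᴴ * σ + t • (ρ * X₀ᴴ) = ρ := by
    simpa [hρ.eq, hσ.eq] using congrArg conjTranspose hX₀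
  have hleft (Y : Matrix n n ℂ) : (ρ * Y).trace
      = (σ * (X₀ * Y)).trace + t * (ρ * (Y * X₀)).trace := by
    conv_lhs => rw [← hX₀]
    rw [add_mul, trace_add, smul_mul_assoc, trace_smul, Matrix.mul_assoc, Matrix.mul_assoc,
      trace_mul_comm X₀, Matrix.mul_assoc]
    rfl
  have hright (Y : Matrix n n ℂ) : (ρ * Y).trace
      = (σ * (Y * X₀ᴴ)).trace + t * (ρ * (X₀ᴴ * Y)).trace := by
    conv_lhs => rw [← hX₀']
    rw [add_mul, trace_add, smul_mul_assoc, trace_smul, Matrix.mul_assoc, trace_mul_comm X₀ᴴ,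
      Matrix.mul_assoc, Matrix.mul_assoc]
    rfl
  have hreal : (ρ * Xᴴ).trace.re = (ρ * X).trace.re := by
    rw [← Complex.conj_re, ← Complex.star_def, ← trace_conjTranspose, conjTranspose_mul,
      conjTranspose_conjTranspose, hρ.eq, trace_mul_comm]
  have e1 := congrArg Complex.re (hright X)
  have e2 := congrArg Complex.re (hleft Xᴴ)
  have e3 := congrArg Complex.re (hright X₀)
  simp only [Complex.add_re, Complex.re_ofReal_mul] at e1 e2 e3
  simp only [modularQuadratic, conjTranspose_sub, sub_mul, mul_sub, trace_sub, Complex.sub_re]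
  linarith

theorem re_trace_mul_nonneg {A B : Matrix n n ℂ} (hA : A.PosSemidef) (hB : B.PosSemidef) :
    0 ≤ (A * B).trace.re := by
  classical
  obtain ⟨M, rfl, -⟩ := exists_eq_mul_conjTranspose hB
  rw [← Matrix.mul_assoc, trace_mul_cycle]
  exact (Complex.le_def.mp (hA.conjTranspose_mul_mul_same M).trace_nonneg).1

theorem modularQuadratic_le {X₀ : Matrix n n ℂ} {t : ℝ} (hρ : ρ.PosSemidef)
    (hσ : σ.PosSemidef) (ht : 0 ≤ t) (hX₀ : σ * X₀ + t • (X₀ * ρ) = ρ) (X : Matrix n n ℂ) :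
    modularQuadratic ρ σ t X ≤ (ρ * X₀).trace.re := by
  rw [modularQuadratic_eq_sub hρ.1 hσ.1 hX₀]
  exact sub_le_self _ (add_nonneg
    (re_trace_mul_nonneg hσ (posSemidef_self_mul_conjTranspose _))
    (mul_nonneg ht (re_trace_mul_nonneg hρ (posSemidef_conjTranspose_mul_self _))))

theorem modularQuadratic_self {X₀ : Matrix n n ℂ} {t : ℝ} (hρ : ρ.IsHermitian)
    (hσ : σ.IsHermitian) (hX₀ : σ * X₀ + t • (X₀ * ρ) = ρ) :
    modularQuadratic ρ σ t X₀ = (ρ * X₀).trace.re := by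
  simp [modularQuadratic_eq_sub hρ hσ hX₀]

variable [DecidableEq n]

/-- The relative entropy `Tr ρ (log ρ − log σ)` of positive definite matrices. -/
def relEntropy (ρ σ : Matrix n n ℂ) : ℝ :=
  (ρ * (cfc log ρ - cfc log σ)).trace.re

theorem mul_cfc_log (hρ : ρ.IsHermitian) :
    ρ * cfc log ρ = - cfc negMulLog ρ := by
  have hneg : negMulLog = fun x => -(x * log x) := by ext x; rw [negMulLog, neg_mul]
  rw [hneg, cfc_neg, neg_neg, cfc_mul (fun x : ℝ => x) log ρ (by fun_prop)
    (continuousOn_real_spectrum log ρ), cfc_id' ℝ ρ hρ.isSelfAdjoint]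

theorem relEntropy_eq_sum (hρ : ρ.IsHermitian) (hσ : σ.IsHermitian) :
    relEntropy ρ σ = ∑ x : n × n, eigenOverlap hρ hσ x.1 x.2
        * (hρ.eigenvalues x.1 * log (hρ.eigenvalues x.1))
      - ∑ x : n × n, eigenOverlap hρ hσ x.1 x.2
        * (hρ.eigenvalues x.1 * log (hσ.eigenvalues x.2)) := by
  have hlogρ : (ρ * cfc log ρ) = cfc (fun x : ℝ => x * log x) ρ * cfc (fun _ => (1 : ℝ)) σ := by
    rw [cfc_mul (fun x : ℝ => x) log ρ (by fun_prop) (continuousOn_real_spectrum log ρ),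
      cfc_id' ℝ ρ hρ.isSelfAdjoint, cfc_const_one ℝ σ hσ.isSelfAdjoint, Matrix.mul_one]
  have hlogσ : (ρ * cfc log σ) = cfc (fun x : ℝ => x) ρ * cfc log σ := by
    rw [cfc_id' ℝ ρ hρ.isSelfAdjoint]
  rw [relEntropy, Matrix.mul_sub, trace_sub, Complex.sub_re, hlogρ, hlogσ,
    trace_cfc_mul_cfc hρ hσ, trace_cfc_mul_cfc hρ hσ, Complex.ofReal_re, Complex.ofReal_re]
  simp only [mul_one, Fintype.sum_prod_type]

/-- The solution `X` of `σ X + t X ρ = ρ`, written in the eigenbases of `σ` and `ρ`; this is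
`(L_σ R_ρ⁻¹ + t)⁻¹` applied to the identity. -/
def modularResolvent (hρ : ρ.IsHermitian) (hσ : σ.IsHermitian) (t : ℝ) : Matrix n n ℂ :=
  hσ.eigenvectorUnitary
    * of (fun j i => ((hρ.eigenvalues i / (hσ.eigenvalues j + t * hρ.eigenvalues i) : ℝ) : ℂ)
      * ((hσ.eigenvectorUnitary : Matrix n n ℂ)ᴴ * hρ.eigenvectorUnitary) j i)
    * (hρ.eigenvectorUnitary : Matrix n n ℂ)ᴴ

theorem mul_modularResolvent_add (hρ : ρ.PosDef) (hσ : σ.PosDef) {t : ℝ} (ht : 0 ≤ t) :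
    σ * modularResolvent hρ.1 hσ.1 t + t • (modularResolvent hρ.1 hσ.1 t * ρ) = ρ := by
  rw [modularResolvent]
  set p := hρ.1.eigenvalues
  set q := hσ.1.eigenvalues
  set U : Matrix n n ℂ := ↑hρ.1.eigenvectorUnitary
  set V : Matrix n n ℂ := ↑hσ.1.eigenvectorUnitary
  set Y : Matrix n n ℂ := of fun j i => ((p i / (q j + t * p i) : ℝ) : ℂ) * (Vᴴ * U) j i
  have hUU : Uᴴ * U = 1 := conjTranspose_mul_eigenvectorUnitary hρ.1
  have hVV : Vᴴ * V = 1 := conjTranspose_mul_eigenvectorUnitary hσ.1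
  have hVV' : V * Vᴴ = 1 := eigenvectorUnitary_mul_conjTranspose hσ.1
  have hρU : ρ = U * diagonal (fun i => (p i : ℂ)) * Uᴴ := eq_conj_diagonal hρ.1
  have hσV : σ = V * diagonal (fun i => (q i : ℂ)) * Vᴴ := eq_conj_diagonal hσ.1
  have hY : diagonal (fun i => (q i : ℂ)) * Y + t • (Y * diagonal (fun i => (p i : ℂ)))
      = Vᴴ * U * diagonal (fun i => (p i : ℂ)) := by
    ext j i
    have hpos : (q j + t * p i : ℂ) ≠ 0 := by
      exact_mod_cast (add_pos_of_pos_of_nonneg (hσ.eigenvalues_pos j)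
        (mul_nonneg ht (hρ.eigenvalues_pos i).le)).ne'
    simp only [Matrix.add_apply, Matrix.smul_apply, diagonal_mul, mul_diagonal, Y, of_apply,
      Complex.real_smul]
    push_cast
    linear_combination (Vᴴ * U) j i * div_mul_cancel₀ (p i : ℂ) hpos
  calc σ * (V * Y * Uᴴ) + t • (V * Y * Uᴴ * ρ)
      = V * (diagonal (fun i => (q i : ℂ)) * Y + t • (Y * diagonal (fun i => (p i : ℂ))))
          * Uᴴ := by
        rw [hρU, hσV]
        simp only [Matrix.mul_assoc, Matrix.mul_add, Matrix.add_mul, smul_mul_assoc,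
          mul_smul_comm, ← Matrix.mul_assoc Uᴴ U, ← Matrix.mul_assoc Vᴴ V, hUU, hVV,
          Matrix.one_mul]
    _ = ρ := by
        rw [hY, hρU]
        simp only [← Matrix.mul_assoc, hVV', Matrix.one_mul]

theorem re_trace_mul_modularResolvent (hρ : ρ.IsHermitian) (hσ : σ.IsHermitian) (t : ℝ) :
    (ρ * modularResolvent hρ hσ t).trace.re = ∑ x : n × n, eigenOverlap hρ hσ x.1 x.2
      * (hρ.eigenvalues x.1 ^ 2 / (hσ.eigenvalues x.2 + t * hρ.eigenvalues x.1)) := by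
  simp only [modularResolvent, eigenOverlap, Fintype.sum_prod_type]
  set p := hρ.eigenvalues
  set q := hσ.eigenvalues
  set U : Matrix n n ℂ := ↑hρ.eigenvectorUnitary
  set V : Matrix n n ℂ := ↑hσ.eigenvectorUnitary
  set Y : Matrix n n ℂ := of fun j i => ((p i / (q j + t * p i) : ℝ) : ℂ) * (Vᴴ * U) j i
  have hUρ : Uᴴ * ρ * U = diagonal fun i => (p i : ℂ) := conj_eigenvectorUnitary hρ
  have hUU : U * Uᴴ = 1 := eigenvectorUnitary_mul_conjTranspose hρ
  have htrace : (ρ * (V * Y * Uᴴ)).trace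
      = (diagonal (fun i => (p i : ℂ)) * (Uᴴ * V * Y)).trace := by
    rw [← hUρ, ← Matrix.mul_assoc, trace_mul_comm]
    simp only [Matrix.mul_assoc, ← Matrix.mul_assoc U Uᴴ, hUU, Matrix.one_mul]
  rw [htrace, trace, Complex.re_sum]
  refine Finset.sum_congr rfl fun i _ => ?_
  rw [diag_apply, diagonal_mul, mul_apply, Finset.mul_sum, Complex.re_sum]
  refine Finset.sum_congr rfl fun j _ => ?_
  have hW : (Vᴴ * U) j i = star ((Uᴴ * V) i j) := by
    rw [← conjTranspose_apply, conjTranspose_mul, conjTranspose_conjTranspose]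
  rw [← Complex.ofReal_re (_ * (_ / _))]
  congr 1
  simp only [Y, of_apply, hW, Complex.star_def]
  push_cast
  rw [← Complex.mul_conj']
  ring

theorem hasDerivAt_sum_mul_log {ι : Type*} [Fintype ι] {w p q : ι → ℝ} (hp : ∀ i, 0 < p i)
    (hq : ∀ i, 0 < q i) {t : ℝ} (ht : 0 ≤ t) :
    HasDerivAt (fun t => ∑ i, w i * (p i * log (q i + t * p i)))
      (∑ i, w i * (p i ^ 2 / (q i + t * p i))) t := by
  refine HasDerivAt.fun_sum fun i _ => ?_
  have hpos : 0 < q i + t * p i := add_pos_of_pos_of_nonneg (hq i) (mul_nonneg ht (hp i).le)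
  have hlin : HasDerivAt (fun t => q i + t * p i) (p i) t := by
    simpa using ((hasDerivAt_id t).mul_const (p i)).const_add (q i)
  refine (((hlin.log hpos.ne').const_mul (p i)).const_mul (w i)).congr_deriv ?_
  rw [← mul_div_assoc (p i), sq]

theorem tendsto_sum_mul_log {ι : Type*} [Fintype ι] {w p q : ι → ℝ} (hp : ∀ i, 0 < p i)
    (hq : ∀ i, 0 < q i) :
    Tendsto (fun t => ∑ i, w i * (p i * log (q i + t * p i)) - (∑ i, w i * p i) * log t) atTop
      (𝓝 (∑ i, w i * (p i * log (p i)))) := by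
  have h : Tendsto (fun t : ℝ => ∑ i, w i * (p i * log (q i * t⁻¹ + p i))) atTop
      (𝓝 (∑ i, w i * (p i * log (p i)))) := by
    refine tendsto_finsetSum _ fun i _ => ((Tendsto.log ?_ (hp i).ne').const_mul _).const_mul _
    simpa using (tendsto_inv_atTop_zero.const_mul (q i)).add_const (p i)
  refine h.congr' ?_
  filter_upwards [eventually_gt_atTop 0] with t ht
  rw [Finset.sum_mul, ← Finset.sum_sub_distrib]
  refine Finset.sum_congr rfl fun i _ => ?_
  have hpos : 0 < q i * t⁻¹ + p i := add_pos (mul_pos (hq i) (inv_pos.mpr ht)) (hp i)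
  have hfactor : q i + t * p i = (q i * t⁻¹ + p i) * t := by field_simp
  rw [hfactor, log_mul hpos.ne' ht.ne']
  ring

-- `∫₀ᵀ p / (q + t p) dt = log (q + T p) - log q` approaches `log p - log q + log T`, and `hsum`
-- makes the `log T` terms of the two sides cancel.
theorem sum_mul_log_le_of_resolvent_le {ι κ : Type*} [Fintype ι] [Fintype κ] {w p q : ι → ℝ}
    {w' p' q' : κ → ℝ} (hp : ∀ i, 0 < p i) (hq : ∀ i, 0 < q i) (hp' : ∀ i, 0 < p' i)
    (hq' : ∀ i, 0 < q' i) (hsum : ∑ i, w' i * p' i = ∑ i, w i * p i)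
    (h : ∀ t, 0 ≤ t → ∑ i, w' i * (p' i ^ 2 / (q' i + t * p' i))
      ≤ ∑ i, w i * (p i ^ 2 / (q i + t * p i))) :
    ∑ i, w' i * (p' i * log (p' i)) - ∑ i, w' i * (p' i * log (q' i))
      ≤ ∑ i, w i * (p i * log (p i)) - ∑ i, w i * (p i * log (q i)) := by
  let F : ℝ → ℝ := fun t => ∑ i, w i * (p i * log (q i + t * p i))
    - ∑ i, w' i * (p' i * log (q' i + t * p' i))
  have hF (t : ℝ) (ht : 0 ≤ t) := (hasDerivAt_sum_mul_log (w := w) hp hq ht).fun_sub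
    (hasDerivAt_sum_mul_log (w := w') hp' hq' ht)
  have hmono : MonotoneOn F (Set.Ici 0) := by
    refine monotoneOn_of_deriv_nonneg (convex_Ici 0)
      (fun t ht => (hF t ht).continuousAt.continuousWithinAt)
      (fun t ht => (hF t (interior_subset ht)).differentiableAt.differentiableWithinAt)
      fun t ht => ?_
    rw [(hF t (interior_subset ht)).deriv]
    exact sub_nonneg.mpr (h t (interior_subset ht))
  have hlim : Tendsto F atTop
      (𝓝 (∑ i, w i * (p i * log (p i)) - ∑ i, w' i * (p' i * log (p' i)))) := by
    refine ((tendsto_sum_mul_log hp hq).sub (tendsto_sum_mul_log hp' hq')).congr fun t => ?_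
    rw [hsum]
    simp only [F]
    ring
  have hzero : F 0 ≤ _ := ge_of_tendsto hlim <| by
    filter_upwards [eventually_ge_atTop 0] with t ht
    exact hmono Set.self_mem_Ici ht ht
  simp only [F, zero_mul, add_zero] at hzero
  linarith

variable [Fintype m] [DecidableEq m]

/-- `ρ'` is the marginal of `ρ` on the subsystem whose observables are embedded by `Φ`. -/
def IsMarginal (Φ : Matrix m m ℂ →⋆ₐ[ℂ] Matrix n n ℂ) (ρ : Matrix n n ℂ) (ρ' : Matrix m m ℂ) :
    Prop :=
  ∀ X, (ρ * Φ X).trace = (ρ' * X).trace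

variable {Φ : Matrix m m ℂ →⋆ₐ[ℂ] Matrix n n ℂ} {ρ' σ' : Matrix m m ℂ}

theorem modularQuadratic_map (hρ : IsMarginal Φ ρ ρ') (hσ : IsMarginal Φ σ σ') (t : ℝ)
    (X : Matrix m m ℂ) : modularQuadratic ρ σ t (Φ X) = modularQuadratic ρ' σ' t X := by
  simp only [modularQuadratic, ← star_eq_conjTranspose, ← map_star, ← map_mul]
  rw [hρ, hρ, hσ]

theorem sum_eigenOverlap_mul_eigenvalues (hρ : ρ.IsHermitian) (hσ : σ.IsHermitian) :
    ∑ x : n × n, eigenOverlap hρ hσ x.1 x.2 * hρ.eigenvalues x.1 = ρ.trace.re := by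
  have h := trace_cfc_mul_cfc hρ hσ (fun x => x) fun _ => 1
  rw [cfc_id' ℝ ρ hρ.isSelfAdjoint, cfc_const_one ℝ σ hσ.isSelfAdjoint, Matrix.mul_one] at h
  rw [h, Complex.ofReal_re, Fintype.sum_prod_type]
  simp only [mul_one]

theorem relEntropy_le_of_isMarginal (hρ : ρ.PosDef) (hσ : σ.PosDef) (hρ' : ρ'.PosDef)
    (hσ' : σ'.PosDef) (hρρ' : IsMarginal Φ ρ ρ') (hσσ' : IsMarginal Φ σ σ') :
    relEntropy ρ' σ' ≤ relEntropy ρ σ := by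
  rw [relEntropy_eq_sum hρ.1 hσ.1, relEntropy_eq_sum hρ'.1 hσ'.1]
  refine sum_mul_log_le_of_resolvent_le (fun _ => hρ.eigenvalues_pos _)
    (fun _ => hσ.eigenvalues_pos _) (fun _ => hρ'.eigenvalues_pos _)
    (fun _ => hσ'.eigenvalues_pos _) ?_ fun t ht => ?_
  · rw [sum_eigenOverlap_mul_eigenvalues, sum_eigenOverlap_mul_eigenvalues]
    simpa using congrArg Complex.re (hρρ' 1).symm
  · rw [← re_trace_mul_modularResolvent, ← re_trace_mul_modularResolvent,
      ← modularQuadratic_self hρ'.1 hσ'.1 (mul_modularResolvent_add hρ' hσ' ht),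
      ← modularQuadratic_map hρρ' hσσ']
    exact modularQuadratic_le hρ.posSemidef hσ.posSemidef ht (mul_modularResolvent_add hρ hσ ht) _

theorem relEntropy_map (hρ : ρ.IsHermitian) (hρ' : ρ'.IsHermitian) (hρρ' : IsMarginal Φ ρ ρ') :
    relEntropy ρ (Φ ρ') = spectralEntropy ρ' - spectralEntropy ρ := by
  have hlog : cfc log (Φ ρ') = Φ (cfc log ρ') :=
    (StarAlgHom.map_cfc (R := ℝ) Φ log ρ' (continuousOn_real_spectrum log ρ')
      (LinearMap.continuous_of_finiteDimensional Φ.toLinearMap) hρ'.isSelfAdjoint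
      (hρ'.isSelfAdjoint.map Φ)).symm
  rw [relEntropy, hlog, Matrix.mul_sub, trace_sub, hρρ', mul_cfc_log hρ, mul_cfc_log hρ',
    trace_neg, trace_neg, Complex.sub_re, Complex.neg_re, Complex.neg_re, spectralEntropy,
    spectralEntropy]
  ring

end RelativeEntropy

section PartialTrace

open Real
open scoped Kronecker

variable {a n : Type*} [Fintype a]

/-- The partial trace over the first tensor factor. -/
def traceLeft (A : Matrix (a × n) (a × n) ℂ) : Matrix n n ℂ :=
  of fun i j => ∑ k, A (k, i) (k, j)

theorem traceLeft_eq_sum_submatrix (A : Matrix (a × n) (a × n) ℂ) :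
    traceLeft A = ∑ k, A.submatrix (Prod.mk k) (Prod.mk k) := by
  ext i j
  simp only [traceLeft, of_apply, Matrix.sum_apply, submatrix_apply]

theorem posSemidef_traceLeft {A : Matrix (a × n) (a × n) ℂ} (hA : A.PosSemidef) :
    (traceLeft A).PosSemidef := by
  rw [traceLeft_eq_sum_submatrix]
  exact posSemidef_sum _ fun k _ => hA.submatrix _

theorem posDef_traceLeft [Nonempty a] {A : Matrix (a × n) (a × n) ℂ} (hA : A.PosDef) :
    (traceLeft A).PosDef := by
  rw [traceLeft_eq_sum_submatrix]
  exact posDef_sum Finset.univ_nonempty fun k _ => hA.submatrix (Prod.mk_right_injective k)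

theorem traceLeft_add_smul_one [DecidableEq a] [DecidableEq n] (A : Matrix (a × n) (a × n) ℂ)
    (δ : ℝ) : traceLeft (A + δ • 1) = traceLeft A + (δ * Fintype.card a) • 1 := by
  ext i j
  simp [traceLeft, Finset.sum_add_distrib, one_apply, mul_comm]

theorem traceLeft_smul_add_smul (p q : ℝ) (A B : Matrix (a × n) (a × n) ℂ) :
    traceLeft (p • A + q • B) = p • traceLeft A + q • traceLeft B := by
  ext i j
  simp [traceLeft, Finset.sum_add_distrib, Finset.mul_sum]

variable [Fintype n]

theorem trace_traceLeft (A : Matrix (a × n) (a × n) ℂ) : (traceLeft A).trace = A.trace := by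
  simp only [trace, diag_apply, traceLeft, of_apply]
  rw [Fintype.sum_prod_type_right]

variable [DecidableEq a] [DecidableEq n]

variable (a) in
/-- The embedding `X ↦ 1 ⊗ X`, dual to `traceLeft`. -/
def oneTensor : Matrix n n ℂ →⋆ₐ[ℂ] Matrix (a × n) (a × n) ℂ where
  toFun X := 1 ⊗ₖ X
  map_one' := one_kronecker_one
  map_mul' X Y := by rw [← mul_kronecker_mul, Matrix.one_mul]
  map_zero' := kronecker_zero _
  map_add' X Y := kronecker_add _ _ _
  commutes' r := by
    rw [Algebra.algebraMap_eq_smul_one, kronecker_smul, one_kronecker_one,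
      Algebra.algebraMap_eq_smul_one]
  map_star' X := by
    rw [star_eq_conjTranspose, star_eq_conjTranspose, conjTranspose_kronecker, conjTranspose_one]

theorem oneTensor_apply (X : Matrix n n ℂ) : oneTensor a X = 1 ⊗ₖ X := rfl

theorem traceLeft_mul_oneTensor (A : Matrix (a × n) (a × n) ℂ) (X : Matrix n n ℂ) :
    traceLeft (A * oneTensor a X) = traceLeft A * X := by
  ext i j
  simp only [traceLeft, oneTensor_apply, mul_apply, of_apply, kroneckerMap_apply,
    Fintype.sum_prod_type, one_apply, ite_mul, one_mul, zero_mul, mul_ite, mul_zero,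
    Finset.sum_ite_irrel, Finset.sum_const_zero, Finset.sum_ite_eq', Finset.mem_univ, if_true,
    Finset.sum_mul]
  exact Finset.sum_comm

theorem traceLeft_oneTensor_mul (A : Matrix (a × n) (a × n) ℂ) (X : Matrix n n ℂ) :
    traceLeft (oneTensor a X * A) = X * traceLeft A := by
  ext i j
  simp only [traceLeft, oneTensor_apply, mul_apply, of_apply, kroneckerMap_apply,
    Fintype.sum_prod_type, one_apply, ite_mul, one_mul, zero_mul,
    Finset.sum_ite_irrel, Finset.sum_const_zero, Finset.sum_ite_eq, Finset.mem_univ, if_true,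
    Finset.mul_sum]
  exact Finset.sum_comm

theorem isMarginal_oneTensor (A : Matrix (a × n) (a × n) ℂ) :
    IsMarginal (oneTensor a) A (traceLeft A) := fun X => by
  rw [← trace_traceLeft, traceLeft_mul_oneTensor]

theorem spectralEntropy_le_traceLeft_add {A : Matrix (a × n) (a × n) ℂ} (hA : A.PosSemidef) :
    spectralEntropy A ≤ spectralEntropy (traceLeft A) + A.trace.re * log (Fintype.card a) := by
  obtain ⟨V, hV, hVA⟩ := exists_unitary_spectralEntropy_eq (posSemidef_traceLeft hA).1
  set W := oneTensor a V
  have hWH : Wᴴ = oneTensor a Vᴴ := (map_star (oneTensor a) V).symm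
  have hW : W * Wᴴ = 1 := by rw [hWH, ← map_mul, hV, map_one]
  set B := Wᴴ * A * W
  have hB : B.PosSemidef := hA.conjTranspose_mul_mul_same W
  have hdiag (j : n) : ∑ k, (B (k, j) (k, j)).re = ((Vᴴ * traceLeft A * V) j j).re := by
    rw [← traceLeft_oneTensor_mul, ← traceLeft_mul_oneTensor, ← hWH, ← Complex.re_sum]
    rfl
  have htrace : ∑ j, ((Vᴴ * traceLeft A * V) j j).re = A.trace.re := by
    have hcycle : (Vᴴ * traceLeft A * V).trace = A.trace := by
      rw [trace_mul_cycle, hV, Matrix.one_mul, trace_traceLeft]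
    rw [← hcycle, trace, Complex.re_sum]
    rfl
  calc spectralEntropy A
      ≤ ∑ x : a × n, negMulLog (B x x).re := spectralEntropy_le_sum_conj_diag hA hW
    _ = ∑ j, ∑ k, negMulLog (B (k, j) (k, j)).re := Fintype.sum_prod_type_right _
    _ ≤ ∑ j, (negMulLog (∑ k, (B (k, j) (k, j)).re)
          + (∑ k, (B (k, j) (k, j)).re) * log (Fintype.card a)) :=
        Finset.sum_le_sum fun j _ => sum_negMulLog_le fun k =>
          (Complex.le_def.mp hB.diag_nonneg).1
    _ = spectralEntropy (traceLeft A) + A.trace.re * log (Fintype.card a) := by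
        simp only [hdiag, Finset.sum_add_distrib, ← Finset.sum_mul, htrace, hVA]

-- Applies the previous bound to a purification: for `A = M Mᴴ` the reshaping `N` of `M` has
-- `N Nᴴ = traceLeft A` and `traceLeft (Nᴴ N) = Mᴴ M`.
theorem spectralEntropy_traceLeft_le {A : Matrix (a × n) (a × n) ℂ} (hA : A.PosSemidef) :
    spectralEntropy (traceLeft A) ≤ spectralEntropy A + A.trace.re * log (Fintype.card a) := by
  obtain ⟨M, rfl, -⟩ := exists_eq_mul_conjTranspose hA
  let N : Matrix n (a × (a × n)) ℂ := of fun x y => M (y.1, x) y.2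
  have hleft : traceLeft (M * Mᴴ) = N * Nᴴ := by
    ext i j
    simp only [N, traceLeft, mul_apply, of_apply, conjTranspose_apply, Fintype.sum_prod_type]
  have hright : traceLeft (Nᴴ * N) = Mᴴ * M := by
    ext i j
    simp only [N, traceLeft, mul_apply, of_apply, conjTranspose_apply, Fintype.sum_prod_type]
  have htrace : (Nᴴ * N).trace = (M * Mᴴ).trace := by
    rw [← trace_traceLeft, hright, trace_mul_comm]
  calc spectralEntropy (traceLeft (M * Mᴴ))
      = spectralEntropy (Nᴴ * N) := by rw [hleft, spectralEntropy_conjTranspose_mul_self]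
    _ ≤ spectralEntropy (traceLeft (Nᴴ * N)) + (Nᴴ * N).trace.re * log (Fintype.card a) :=
        spectralEntropy_le_traceLeft_add (posSemidef_conjTranspose_mul_self N)
    _ = spectralEntropy (M * Mᴴ) + (M * Mᴴ).trace.re * log (Fintype.card a) := by
        rw [hright, htrace, spectralEntropy_conjTranspose_mul_self]

end PartialTrace

section StrongSubadditivity

open scoped Kronecker

variable {a b c : Type*}

theorem mBC_eq_traceLeft [Fintype a] (ω : Matrix (a × b × c) (a × b × c) ℂ) :
    mBC ω = traceLeft ω := rfl

variable [Fintype c]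

theorem mB_eq_traceLeft_mAB [Fintype a] (ω : Matrix (a × b × c) (a × b × c) ℂ) :
    mB ω = traceLeft (mAB ω) := rfl

theorem mAB_eq_sum_submatrix (ω : Matrix (a × b × c) (a × b × c) ℂ) :
    mAB ω = ∑ k : c, ω.submatrix (fun p => (p.1, p.2, k)) (fun p => (p.1, p.2, k)) := by
  ext i j
  simp only [mAB, of_apply, Matrix.sum_apply, submatrix_apply]

theorem posSemidef_mAB {ω : Matrix (a × b × c) (a × b × c) ℂ} (hω : ω.PosSemidef) :
    (mAB ω).PosSemidef := by
  rw [mAB_eq_sum_submatrix]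
  exact posSemidef_sum _ fun k _ => hω.submatrix _

theorem posDef_mAB [Nonempty c] {ω : Matrix (a × b × c) (a × b × c) ℂ} (hω : ω.PosDef) :
    (mAB ω).PosDef := by
  rw [mAB_eq_sum_submatrix]
  refine posDef_sum Finset.univ_nonempty fun k _ => hω.submatrix fun p q hpq => ?_
  simp only [Prod.mk.injEq, and_true] at hpq
  exact Prod.ext hpq.1 hpq.2

theorem mAB_add_smul_one [DecidableEq a] [DecidableEq b] [DecidableEq c]
    (ω : Matrix (a × b × c) (a × b × c) ℂ) (δ : ℝ) :
    mAB (ω + δ • 1) = mAB ω + (δ * Fintype.card c) • 1 := by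
  ext i j
  simp [mAB, Finset.sum_add_distrib, one_apply, Prod.ext_iff, mul_comm]

variable [Fintype a] [Fintype b]

theorem trace_mAB (ω : Matrix (a × b × c) (a × b × c) ℂ) : (mAB ω).trace = ω.trace := by
  simp only [trace, diag_apply, mAB, of_apply, Fintype.sum_prod_type]

variable [DecidableEq a] [DecidableEq b] [DecidableEq c]

variable (a b c) in
/-- The embedding `X ↦ X ⊗ 1_C`, dual to the partial trace over `C`. -/
def tensorOne : Matrix (a × b) (a × b) ℂ →⋆ₐ[ℂ] Matrix (a × b × c) (a × b × c) ℂ where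
  toFun X := (X ⊗ₖ 1).submatrix (Equiv.prodAssoc a b c).symm (Equiv.prodAssoc a b c).symm
  map_one' := by rw [one_kronecker_one, submatrix_one_equiv]
  map_mul' X Y := by rw [submatrix_mul_equiv, ← mul_kronecker_mul, Matrix.one_mul]
  map_zero' := by rw [zero_kronecker]; rfl
  map_add' X Y := by rw [add_kronecker]; rfl
  commutes' r := by
    rw [Algebra.algebraMap_eq_smul_one, smul_kronecker, one_kronecker_one,
      Algebra.algebraMap_eq_smul_one, ← submatrix_one_equiv (Equiv.prodAssoc a b c).symm]
    rfl
  map_star' X := by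
    rw [star_eq_conjTranspose, star_eq_conjTranspose, conjTranspose_submatrix,
      conjTranspose_kronecker, conjTranspose_one]

theorem tensorOne_apply (X : Matrix (a × b) (a × b) ℂ) (p q : a × b × c) :
    tensorOne a b c X p q
      = X (p.1, p.2.1) (q.1, q.2.1) * (1 : Matrix c c ℂ) p.2.2 q.2.2 := rfl

theorem mAB_mul_tensorOne (ω : Matrix (a × b × c) (a × b × c) ℂ) (X : Matrix (a × b) (a × b) ℂ) :
    mAB (ω * tensorOne a b c X) = mAB ω * X := by
  ext i j
  simp only [mAB, tensorOne_apply, mul_apply, of_apply, Fintype.sum_prod_type, one_apply, mul_ite,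
    mul_one, mul_zero, Finset.sum_ite_eq', Finset.mem_univ, if_true, Finset.sum_mul]
  rw [Finset.sum_comm]
  exact Finset.sum_congr rfl fun _ _ => Finset.sum_comm

theorem isMarginal_tensorOne (ω : Matrix (a × b × c) (a × b × c) ℂ) :
    IsMarginal (tensorOne a b c) ω (mAB ω) := fun X => by
  rw [← trace_mAB, mAB_mul_tensorOne]

theorem mAB_oneTensor_mBC (ω : Matrix (a × b × c) (a × b × c) ℂ) :
    mAB (oneTensor a (mBC ω)) = oneTensor a (mB ω) := by
  ext i j
  simp only [mAB, mB, mBC, oneTensor_apply, of_apply, kroneckerMap_apply]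
  rw [Finset.sum_comm, Finset.mul_sum]

theorem spectralEntropy_strong_subadditivity_of_posDef [Nonempty a] [Nonempty c]
    {ω : Matrix (a × b × c) (a × b × c) ℂ} (hω : ω.PosDef) :
    spectralEntropy ω + spectralEntropy (mB ω)
      ≤ spectralEntropy (mAB ω) + spectralEntropy (mBC ω) := by
  have hAB : (mAB ω).PosDef := posDef_mAB hω
  have hBC : (mBC ω).PosDef := posDef_traceLeft hω
  have hB : (mB ω).PosDef := mB_eq_traceLeft_mAB ω ▸ posDef_traceLeft hAB
  have hmarginal : IsMarginal (tensorOne a b c) (oneTensor a (mBC ω)) (oneTensor a (mB ω)) := by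
    rw [← mAB_oneTensor_mBC]
    exact isMarginal_tensorOne _
  have hmono : relEntropy (mAB ω) (oneTensor a (mB ω)) ≤ relEntropy ω (oneTensor a (mBC ω)) :=
    relEntropy_le_of_isMarginal hω (PosDef.one.kronecker hBC) hAB (PosDef.one.kronecker hB)
      (isMarginal_tensorOne ω) hmarginal
  rw [relEntropy_map hAB.1 hB.1 (isMarginal_oneTensor (mAB ω)),
    relEntropy_map hω.1 hBC.1 (isMarginal_oneTensor ω)] at hmono
  linarith

theorem spectralEntropy_strong_subadditivity [Nonempty a] [Nonempty c]
    {ω : Matrix (a × b × c) (a × b × c) ℂ} (hω : ω.PosSemidef) :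
    spectralEntropy ω + spectralEntropy (mB ω)
      ≤ spectralEntropy (mAB ω) + spectralEntropy (mBC ω) := by
  have hAB : (mAB ω).PosSemidef := posSemidef_mAB hω
  have hBC : (mBC ω).PosSemidef := posSemidef_traceLeft hω
  have hB : (mB ω).PosSemidef := mB_eq_traceLeft_mAB ω ▸ posSemidef_traceLeft hAB
  have hlhs := (tendsto_spectralEntropy_add_smul_one hω.1 1).add
    (tendsto_spectralEntropy_add_smul_one hB.1 (Fintype.card c * Fintype.card a))
  have hrhs := (tendsto_spectralEntropy_add_smul_one hAB.1 (Fintype.card c)).add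
    (tendsto_spectralEntropy_add_smul_one hBC.1 (Fintype.card a))
  refine le_of_tendsto_of_tendsto (hlhs.mono_left (nhdsWithin_le_nhds (s := Set.Ioi 0)))
    (hrhs.mono_left nhdsWithin_le_nhds) ?_
  filter_upwards [self_mem_nhdsWithin] with δ hδ
  have h := spectralEntropy_strong_subadditivity_of_posDef
    (PosDef.posSemidef_add hω (PosDef.one.smul (Set.mem_Ioi.mp hδ)))
  rw [mB_eq_traceLeft_mAB, mAB_add_smul_one, mBC_eq_traceLeft, traceLeft_add_smul_one,
    traceLeft_add_smul_one, mul_assoc] at h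
  rw [mul_one]
  exact h

end StrongSubadditivity

section States

open Real

variable {n : Type*} [Fintype n]

theorem convex_isState : Convex ℝ {ρ : Matrix n n ℂ | IsState ρ} := by
  intro ρ hρ σ hσ p q hp hq hpq
  refine ⟨(hρ.1.smul hp).add (hσ.1.smul hq), ?_⟩
  rw [trace_add, trace_smul, trace_smul, hρ.2, hσ.2, ← add_smul, hpq, one_smul]

theorem IsState.nonempty {ρ : Matrix n n ℂ} (hρ : IsState ρ) : Nonempty n := by
  by_contra hempty
  rw [not_nonempty_iff] at hempty
  exact zero_ne_one ((trace_eq_zero_of_isEmpty ρ).symm.trans hρ.2)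

variable [DecidableEq n]

theorem IsState.vnEnt_eq_spectralEntropy {ρ : Matrix n n ℂ} (hρ : IsState ρ) :
    vnEnt ρ = spectralEntropy ρ := by
  rw [vnEnt_eq hρ.1.1, hρ.2, Complex.one_re, negMulLog_one, sub_zero]

theorem concaveOn_vnEnt : ConcaveOn ℝ {ρ : Matrix n n ℂ | IsState ρ} vnEnt :=
  (concaveOn_spectralEntropy.subset (fun _ hρ => hρ.1) convex_isState).congr
    fun _ hρ => (IsState.vnEnt_eq_spectralEntropy hρ).symm

theorem IsState.vnEnt_smul_add_smul_sub_mem_Icc {ρ σ : Matrix n n ℂ} (hρ : IsState ρ)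
    (hσ : IsState σ) {p q : ℝ} (hp : 0 ≤ p) (hq : 0 ≤ q) (hpq : p + q = 1) :
    vnEnt (p • ρ + q • σ) - (p * vnEnt ρ + q * vnEnt σ) ∈ Set.Icc 0 (binEntropy q) := by
  refine ⟨sub_nonneg.mpr (concaveOn_vnEnt.2 hρ hσ hp hq hpq), ?_⟩
  have h := spectralEntropy_add_le (hρ.1.smul hp) (hσ.1.smul hq)
  rw [spectralEntropy_smul hρ.1.1, spectralEntropy_smul hσ.1.1, hρ.2, hσ.2, Complex.one_re] at h
  rw [(convex_isState hρ hσ hp hq hpq).vnEnt_eq_spectralEntropy, hρ.vnEnt_eq_spectralEntropy,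
    hσ.vnEnt_eq_spectralEntropy, binEntropy_eq_negMulLog_add_negMulLog_one_sub,
    ← eq_sub_of_add_eq hpq]
  linarith

end States

section ConditionalMutualInformation

open Real

variable {a b c : Type*}

theorem mBC_smul_add_smul [Fintype a] (p q : ℝ) (ω ω' : Matrix (a × b × c) (a × b × c) ℂ) :
    mBC (p • ω + q • ω') = p • mBC ω + q • mBC ω' :=
  traceLeft_smul_add_smul p q ω ω'

variable [Fintype c]

theorem mAB_smul_add_smul (p q : ℝ) (ω ω' : Matrix (a × b × c) (a × b × c) ℂ) :
    mAB (p • ω + q • ω') = p • mAB ω + q • mAB ω' := by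
  ext i j
  simp [mAB, Finset.sum_add_distrib, Finset.mul_sum]

variable [Fintype a]

theorem mB_smul_add_smul (p q : ℝ) (ω ω' : Matrix (a × b × c) (a × b × c) ℂ) :
    mB (p • ω + q • ω') = p • mB ω + q • mB ω' := by
  simp only [mB_eq_traceLeft_mAB, mAB_smul_add_smul, traceLeft_smul_add_smul]

variable [Fintype b] {ω ω' : Matrix (a × b × c) (a × b × c) ℂ}

theorem isState_traceLeft {m : Type*} [Fintype m] {ρ : Matrix (a × m) (a × m) ℂ}
    (hρ : IsState ρ) : IsState (traceLeft ρ) :=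
  ⟨posSemidef_traceLeft hρ.1, (trace_traceLeft ρ).trans hρ.2⟩

theorem isState_mAB (hω : IsState ω) : IsState (mAB ω) :=
  ⟨posSemidef_mAB hω.1, (trace_mAB ω).trans hω.2⟩

theorem isState_mBC (hω : IsState ω) : IsState (mBC ω) :=
  isState_traceLeft hω

theorem isState_mB (hω : IsState ω) : IsState (mB ω) :=
  mB_eq_traceLeft_mAB ω ▸ isState_traceLeft (isState_mAB hω)

variable [DecidableEq a] [DecidableEq b] [DecidableEq c]

theorem IsState.cmi_eq (hω : IsState ω) :
    cmi ω = spectralEntropy (mAB ω) + spectralEntropy (mBC ω) - spectralEntropy ω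
      - spectralEntropy (mB ω) := by
  rw [cmi, hω.vnEnt_eq_spectralEntropy, (isState_mAB hω).vnEnt_eq_spectralEntropy,
    (isState_mBC hω).vnEnt_eq_spectralEntropy, (isState_mB hω).vnEnt_eq_spectralEntropy]

theorem IsState.cmi_nonneg (hω : IsState ω) : 0 ≤ cmi ω := by
  obtain ⟨i, _, k⟩ := hω.nonempty
  have : Nonempty a := ⟨i⟩
  have : Nonempty c := ⟨k⟩
  rw [hω.cmi_eq]
  linarith [spectralEntropy_strong_subadditivity hω.1]

theorem IsState.cmi_le (hω : IsState ω) : cmi ω ≤ 2 * log (Fintype.card a) := by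
  have hAB := spectralEntropy_le_traceLeft_add (isState_mAB hω).1
  have hABC := spectralEntropy_traceLeft_le hω.1
  rw [(isState_mAB hω).2, Complex.one_re, one_mul, ← mB_eq_traceLeft_mAB] at hAB
  rw [hω.2, Complex.one_re, one_mul, ← mBC_eq_traceLeft] at hABC
  rw [hω.cmi_eq]
  linarith

theorem IsState.abs_cmi_smul_add_smul_sub_le (hω : IsState ω) (hω' : IsState ω') {p q : ℝ}
    (hp : 0 ≤ p) (hq : 0 ≤ q) (hpq : p + q = 1) :
    |cmi (p • ω + q • ω') - (p * cmi ω + q * cmi ω')| ≤ 2 * binEntropy q := by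
  obtain ⟨lowerABC, upperABC⟩ := hω.vnEnt_smul_add_smul_sub_mem_Icc hω' hp hq hpq
  obtain ⟨lowerAB, upperAB⟩ :=
    (isState_mAB hω).vnEnt_smul_add_smul_sub_mem_Icc (isState_mAB hω') hp hq hpq
  obtain ⟨lowerBC, upperBC⟩ :=
    (isState_mBC hω).vnEnt_smul_add_smul_sub_mem_Icc (isState_mBC hω') hp hq hpq
  obtain ⟨lowerB, upperB⟩ :=
    (isState_mB hω).vnEnt_smul_add_smul_sub_mem_Icc (isState_mB hω') hp hq hpq
  rw [← mAB_smul_add_smul] at lowerAB upperAB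
  rw [← mBC_smul_add_smul] at lowerBC upperBC
  rw [← mB_smul_add_smul] at lowerB upperB
  rw [cmi, cmi, cmi, abs_le]
  constructor <;> linarith

theorem IsState.cmi_sub_le {ω₁ ω₂ τ τ' : Matrix (a × b × c) (a × b × c) ℂ} (h₁ : IsState ω₁)
    (h₂ : IsState ω₂) (hτ : IsState τ) (hτ' : IsState τ') {ε : ℝ} (hε : 0 ≤ ε)
    (h : ω₁ + ε • τ' = ω₂ + ε • τ) :
    cmi ω₁ - cmi ω₂
      ≤ 2 * ε * log (Fintype.card a) + 4 * (1 + ε) * binEntropy (ε / (1 + ε)) := by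
  have hpos : 0 < 1 + ε := by linarith
  have hp : 0 ≤ (1 + ε)⁻¹ := by positivity
  have hq : 0 ≤ ε / (1 + ε) := by positivity
  have hpq : (1 + ε)⁻¹ + ε / (1 + ε) = 1 := by field_simp
  have hmix : (1 + ε)⁻¹ • ω₁ + (ε / (1 + ε)) • τ' = (1 + ε)⁻¹ • ω₂ + (ε / (1 + ε)) • τ := by
    simp only [div_eq_inv_mul, mul_smul, ← smul_add, h]
  have hlower := (abs_le.mp (h₁.abs_cmi_smul_add_smul_sub_le hτ' hp hq hpq)).1
  have hupper := (abs_le.mp (h₂.abs_cmi_smul_add_smul_sub_le hτ hp hq hpq)).2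
  rw [hmix] at hlower
  have haffine : (1 + ε)⁻¹ * (cmi ω₁ - cmi ω₂)
      ≤ ε / (1 + ε) * (cmi τ - cmi τ') + 4 * binEntropy (ε / (1 + ε)) := by linarith
  have hrange : ε * (cmi τ - cmi τ') ≤ ε * (2 * log (Fintype.card a)) :=
    mul_le_mul_of_nonneg_left (by linarith [hτ.cmi_le, hτ'.cmi_nonneg]) hε
  calc cmi ω₁ - cmi ω₂
      ≤ (1 + ε) * (ε / (1 + ε) * (cmi τ - cmi τ') + 4 * binEntropy (ε / (1 + ε))) :=
        (inv_mul_le_iff₀ hpos).mp haffine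
    _ = ε * (cmi τ - cmi τ') + 4 * (1 + ε) * binEntropy (ε / (1 + ε)) := by
        field_simp
    _ ≤ 2 * ε * log (Fintype.card a) + 4 * (1 + ε) * binEntropy (ε / (1 + ε)) := by linarith

end ConditionalMutualInformation

section JordanDecomposition

open scoped MatrixOrder

variable {n : Type*} [Fintype n]

theorem exists_isState_smul_eq [Nonempty n] {P : Matrix n n ℂ} (hP : P.PosSemidef) :
    ∃ τ, IsState τ ∧ P.trace.re • τ = P := by
  classical
  have htrace : (P.trace.re : ℂ) = P.trace := Complex.conj_eq_iff_re.mp (by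
    rw [← Complex.star_def, ← trace_conjTranspose, hP.1.eq])
  rcases eq_or_ne P 0 with rfl | hne
  · exact ⟨(Fintype.card n : ℝ)⁻¹ • 1, ⟨PosSemidef.one.smul (by positivity), by simp⟩, by simp⟩
  · have hre : P.trace.re ≠ 0 := fun h =>
      hne (hP.trace_eq_zero_iff.mp (by rw [← htrace, h, Complex.ofReal_zero]))
    have hnonneg : 0 ≤ P.trace.re := (Complex.le_def.mp hP.trace_nonneg).1
    refine ⟨P.trace.re⁻¹ • P, ⟨hP.smul (inv_nonneg.mpr hnonneg), ?_⟩, smul_inv_smul₀ hre P⟩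
    rw [trace_smul, ← htrace, Complex.real_smul, Complex.ofReal_re, ← Complex.ofReal_mul,
      inv_mul_cancel₀ hre, Complex.ofReal_one]

variable [DecidableEq n]

theorem traceNorm_eq_re_trace_abs (A : Matrix n n ℂ) : traceNorm A = (CFC.abs A).trace.re := by
  have habs : CFC.abs A = cfc Real.sqrt (Aᴴ * A) := by
    rw [CFC.abs, CFC.sqrt_eq_real_sqrt _ (star_mul_self_nonneg A), cfcₙ_eq_cfc]
    rfl
  rw [habs, trace_cfc (posSemidef_conjTranspose_mul_self A).1, Complex.ofReal_re, traceNorm]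

theorem traceNorm_nonneg (A : Matrix n n ℂ) : 0 ≤ traceNorm A :=
  Finset.sum_nonneg fun _ _ => Real.sqrt_nonneg _

theorem IsState.exists_add_smul_eq_add_smul {ρ σ : Matrix n n ℂ} (hρ : IsState ρ)
    (hσ : IsState σ) : ∃ τ τ', IsState τ ∧ IsState τ' ∧
      ρ + (traceNorm (ρ - σ) / 2) • τ' = σ + (traceNorm (ρ - σ) / 2) • τ := by
  have : Nonempty n := hρ.nonempty
  have hΔ : IsSelfAdjoint (ρ - σ) := (hρ.1.1.sub hσ.1.1).isSelfAdjoint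
  have hsub := CFC.posPart_sub_negPart (ρ - σ) hΔ
  have hadd := CFC.posPart_add_negPart (ρ - σ) hΔ
  have htrace_sub : (ρ - σ)⁺.trace.re - (ρ - σ)⁻.trace.re = 0 := by
    rw [← Complex.sub_re, ← trace_sub, hsub, trace_sub, hρ.2, hσ.2, sub_self, Complex.zero_re]
  have htrace_add : (ρ - σ)⁺.trace.re + (ρ - σ)⁻.trace.re = traceNorm (ρ - σ) := by
    rw [← Complex.add_re, ← trace_add, hadd, traceNorm_eq_re_trace_abs]
  obtain ⟨τ, hτ, hpos⟩ := exists_isState_smul_eq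
    (nonneg_iff_posSemidef.mp (CFC.posPart_nonneg (ρ - σ)))
  obtain ⟨τ', hτ', hneg⟩ := exists_isState_smul_eq
    (nonneg_iff_posSemidef.mp (CFC.negPart_nonneg (ρ - σ)))
  have hε_pos : (ρ - σ)⁺.trace.re = traceNorm (ρ - σ) / 2 := by linarith
  have hε_neg : (ρ - σ)⁻.trace.re = traceNorm (ρ - σ) / 2 := by linarith
  rw [hε_pos] at hpos
  rw [hε_neg] at hneg
  refine ⟨τ, τ', hτ, hτ', ?_⟩
  rw [hpos, hneg, add_comm σ, ← sub_eq_sub_iff_add_eq_add, hsub]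

end JordanDecomposition

theorem cmi_continuity_bound_general {a b c : Type*} [Fintype a] [DecidableEq a] [Fintype b]
    [DecidableEq b] [Fintype c] [DecidableEq c]
    (ω₁ ω₂ : Matrix (a × b × c) (a × b × c) ℂ) (h1 : IsState ω₁) (h2 : IsState ω₂) :
    |cmi ω₁ - cmi ω₂|
      ≤ 2 * (traceNorm (ω₁ - ω₂) / 2) * Real.log (Fintype.card a)
        + 4 * (1 + traceNorm (ω₁ - ω₂) / 2) *
            Real.binEntropy ((traceNorm (ω₁ - ω₂) / 2) / (1 + traceNorm (ω₁ - ω₂) / 2)) := by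
  obtain ⟨τ, τ', hτ, hτ', hmix⟩ := h1.exists_add_smul_eq_add_smul h2
  have hε : 0 ≤ traceNorm (ω₁ - ω₂) / 2 := div_nonneg (traceNorm_nonneg _) zero_le_two
  exact abs_sub_le_iff.mpr
    ⟨h1.cmi_sub_le h2 hτ hτ' hε hmix, h2.cmi_sub_le h1 hτ' hτ hε hmix.symm⟩

/-- Continuity bound for the conditional mutual information:
`|I(A:C|B)_{ω¹} − I(A:C|B)_{ω²}| ≤ 2ε log dim H_A + 4(1+ε)h₂(ε/(1+ε))` when
`ε = ½‖ω¹−ω²‖₁ < 1`. -/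
theorem cmi_continuity_bound {a b c : Type*} [Fintype a] [DecidableEq a] [Fintype b]
    [DecidableEq b] [Fintype c] [DecidableEq c]
    (ω₁ ω₂ : Matrix (a × b × c) (a × b × c) ℂ) (h1 : IsState ω₁) (h2 : IsState ω₂)
    (hε : traceNorm (ω₁ - ω₂) / 2 < 1) :
    |cmi ω₁ - cmi ω₂|
      ≤ 2 * (traceNorm (ω₁ - ω₂) / 2) * Real.log (Fintype.card a)
        + 4 * (1 + traceNorm (ω₁ - ω₂) / 2) *
            Real.binEntropy ((traceNorm (ω₁ - ω₂) / 2) / (1 + traceNorm (ω₁ - ω₂) / 2)) :=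
  cmi_continuity_bound_general ω₁ ω₂ h1 h2
end
end

section
/- For positive trace-class operators ρ, σ on H_ABC with Tr ρ ≤ 1 and Tr σ ≤ 1 (finite-dimensional case), and λ ∈ [0,1], the conditional mutual information satisfies λ I(A:C|B)_ρ + (1−λ) I(A:C|B)_σ ≤ I(A:C|B)_{λρ+(1−λ)σ} + 2h₂(λ). -/
open Matrix
open scoped ComplexOrder

noncomputable section

/-! Write `D(p, q) = η(p) + η(q) − η(p + q)` for the unnormalised binary entropy. The entropy `H` is
homogeneous of degree one, superadditive, and subadditive up to `D`:
`H(P) + H(Q) ≤ H(P + Q) ≤ H(P) + H(Q) + D(Tr P, Tr Q)`. In `I = H(AB) + H(BC) − H(ABC) − H(B)` the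
first bound controls the two positive terms and the second one the two negative terms, so each of
the latter costs one `D`, and `D(λ Tr ρ, (1 − λ) Tr σ) ≤ h₂(λ)` when the traces are at most one.

Both bounds rest on Peierls' inequality: for concave `f`, `Tr f(A)` is at most the sum of `f` over
the diagonal of `A` in any orthonormal basis. In an eigenbasis of `P + Q` it reduces the first bound
to superadditivity of `D`. For the second, factor `P = B B*` and `Q = C C*` so that `B* B` and
`C* C` are diagonal, and apply it to the Gram matrix of the columns of `(B | C)`, whose nonzero
eigenvalues are those of `P + Q`.
-/

section MixEntropy

open Real

/-- The unnormalised binary entropy `η(p) + η(q) − η(p + q)`: the entropy gained by forgetting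
which of two alternatives of weights `p` and `q` occurred. -/
def mixEntropy (p q : ℝ) : ℝ := negMulLog p + negMulLog q - negMulLog (p + q)

theorem mixEntropy_one_sub (l : ℝ) : mixEntropy l (1 - l) = binEntropy l := by
  simp [mixEntropy, binEntropy_eq_negMulLog_add_negMulLog_one_sub]

theorem mixEntropy_mul_mul (s p q : ℝ) : mixEntropy (s * p) (s * q) = s * mixEntropy p q := by
  simp only [mixEntropy, ← mul_add, negMulLog_mul]
  ring

theorem mixEntropy_eq_mul_binEntropy {p q : ℝ} (h : p + q ≠ 0) :
    mixEntropy p q = (p + q) * binEntropy (p / (p + q)) := by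
  have hq : 1 - p / (p + q) = q / (p + q) := by field_simp; ring
  rw [← mixEntropy_one_sub, hq, ← mixEntropy_mul_mul, mul_div_cancel₀ p h, mul_div_cancel₀ q h]

theorem mixEntropy_nonneg {p q : ℝ} (hp : 0 ≤ p) (hq : 0 ≤ q) : 0 ≤ mixEntropy p q := by
  rcases (add_nonneg hp hq).eq_or_lt' with h | h
  · obtain ⟨rfl, rfl⟩ := (add_eq_zero_iff_of_nonneg hp hq).1 h
    simp [mixEntropy]
  · rw [mixEntropy_eq_mul_binEntropy h.ne']
    exact mul_nonneg h.le
      (binEntropy_nonneg (by positivity) (div_le_one_of_le₀ (le_add_of_nonneg_right hq) h.le))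

theorem mixEntropy_add_mixEntropy_le {p q p' q' : ℝ} (hp : 0 ≤ p) (hq : 0 ≤ q) (hp' : 0 ≤ p')
    (hq' : 0 ≤ q') : mixEntropy p q + mixEntropy p' q' ≤ mixEntropy (p + p') (q + q') := by
  rcases (add_nonneg hp hq).eq_or_lt' with h | h
  · obtain ⟨rfl, rfl⟩ := (add_eq_zero_iff_of_nonneg hp hq).1 h
    simp [mixEntropy]
  rcases (add_nonneg hp' hq').eq_or_lt' with h' | h'
  · obtain ⟨rfl, rfl⟩ := (add_eq_zero_iff_of_nonneg hp' hq').1 h'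
    simp [mixEntropy]
  have hmem {x y : ℝ} (hx : 0 ≤ x) (hy : 0 ≤ y) : x / (x + y) ∈ Set.Icc (0 : ℝ) 1 :=
    ⟨by positivity, div_le_one_of_le₀ (le_add_of_nonneg_right hy) (by positivity)⟩
  have hsum : p + q + (p' + q') = p + p' + (q + q') := add_add_add_comm p q p' q'
  have hpos : 0 < p + p' + (q + q') := hsum ▸ add_pos h h'
  have hjensen := (concaveOn_iff_div.1 strictConcave_binEntropy.concaveOn).2
    (hmem hp hq) (hmem hp' hq') h.le h'.le (add_pos h h')
  simp only [smul_eq_mul, hsum, div_mul_eq_mul_div, ← add_div, mul_div_cancel₀ _ h.ne',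
    mul_div_cancel₀ _ h'.ne', div_le_iff₀' hpos] at hjensen
  rwa [mixEntropy_eq_mul_binEntropy h.ne', mixEntropy_eq_mul_binEntropy h'.ne',
    mixEntropy_eq_mul_binEntropy hpos.ne']

theorem sum_mixEntropy_le {ι : Type*} (s : Finset ι) {p q : ι → ℝ}
    (hp : ∀ i ∈ s, 0 ≤ p i) (hq : ∀ i ∈ s, 0 ≤ q i) :
    ∑ i ∈ s, mixEntropy (p i) (q i) ≤ mixEntropy (∑ i ∈ s, p i) (∑ i ∈ s, q i) := by
  classical
  induction s using Finset.induction with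
  | empty => simp [mixEntropy]
  | insert i s hi ih =>
    rw [Finset.forall_mem_insert] at hp hq
    simp only [Finset.sum_insert hi]
    exact (add_le_add_right (ih hp.2 hq.2) _).trans <| mixEntropy_add_mixEntropy_le hp.1 hq.1
      (Finset.sum_nonneg hp.2) (Finset.sum_nonneg hq.2)

theorem mixEntropy_le_mixEntropy {p q p' q' : ℝ} (hp : 0 ≤ p) (hq : 0 ≤ q) (hpp' : p ≤ p')
    (hqq' : q ≤ q') : mixEntropy p q ≤ mixEntropy p' q' := by
  have hsuper := mixEntropy_add_mixEntropy_le hp hq (sub_nonneg.2 hpp') (sub_nonneg.2 hqq')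
  have hdiff := mixEntropy_nonneg (sub_nonneg.2 hpp') (sub_nonneg.2 hqq')
  rw [add_sub_cancel, add_sub_cancel] at hsuper
  linarith

theorem mixEntropy_mul_le_binEntropy {l p q : ℝ} (hl₀ : 0 ≤ l) (hl₁ : l ≤ 1) (hp₀ : 0 ≤ p)
    (hp₁ : p ≤ 1) (hq₀ : 0 ≤ q) (hq₁ : q ≤ 1) :
    mixEntropy (l * p) ((1 - l) * q) ≤ binEntropy l := by
  have hl : 0 ≤ 1 - l := sub_nonneg.2 hl₁
  rw [← mixEntropy_one_sub]
  exact mixEntropy_le_mixEntropy (mul_nonneg hl₀ hp₀) (mul_nonneg hl hq₀)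
    (mul_le_of_le_one_right hl₀ hp₁) (mul_le_of_le_one_right hl hq₁)

end MixEntropy

section UnitaryConjugation

open Unitary

variable {R n : Type*} [CommRing R] [StarRing R] [Fintype n] [DecidableEq n]

theorem charpoly_conjStarAlgAut (U : unitaryGroup n R) (A : Matrix n n R) :
    (conjStarAlgAut R _ U A).charpoly = A.charpoly := by
  rw [conjStarAlgAut_apply, charpoly_mul_comm, ← Matrix.mul_assoc, coe_star_mul_self,
    Matrix.one_mul]

theorem trace_conjStarAlgAut (U : unitaryGroup n R) (A : Matrix n n R) :
    (conjStarAlgAut R _ U A).trace = A.trace := by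
  rw [conjStarAlgAut_apply, trace_mul_comm, ← Matrix.mul_assoc, coe_star_mul_self, Matrix.one_mul]

end UnitaryConjugation

section TraceFun

open Unitary

variable {𝕜 m n : Type*} [RCLike 𝕜]

theorem re_mul_diagonal_mul_conjTranspose_apply_self [Fintype n] [DecidableEq n]
    (U : Matrix m n 𝕜) (d : n → ℝ) (i : m) :
    RCLike.re ((U * (diagonal (RCLike.ofReal ∘ d) : Matrix n n 𝕜) * Uᴴ) i i) =
      ∑ j, ‖U i j‖ ^ 2 * d j := by
  rw [Matrix.mul_apply, map_sum]
  refine Finset.sum_congr rfl fun j _ => ?_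
  rw [mul_diagonal, conjTranspose_apply, mul_right_comm, RCLike.star_def, RCLike.mul_conj,
    Function.comp_apply]
  norm_cast

variable [Fintype m] [DecidableEq m] [Fintype n] [DecidableEq n]

/-- The trace function `Tr f(A)`. Summing over the roots of the characteristic polynomial, rather
than over `Matrix.IsHermitian.eigenvalues`, makes its invariance under similarity and under
`A * B ↦ B * A` immediate. -/
def traceFun (f : ℝ → ℝ) (A : Matrix n n 𝕜) : ℝ :=
  (A.charpoly.roots.map fun z => f (RCLike.re z)).sum

theorem traceFun_eq_sum_eigenvalues (f : ℝ → ℝ) {A : Matrix n n 𝕜} (hA : A.IsHermitian) :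
    traceFun f A = ∑ i, f (hA.eigenvalues i) := by
  simp [traceFun, hA.roots_charpoly_eq_eigenvalues]

theorem traceFun_diagonal (f : ℝ → ℝ) (d : n → 𝕜) :
    traceFun f (diagonal d) = ∑ i, f (RCLike.re (d i)) := by
  rw [traceFun, charpoly_diagonal,
    Polynomial.roots_prod _ _ (Polynomial.monic_prod_X_sub_C d Finset.univ).ne_zero]
  simp

theorem traceFun_mul_comm (f : ℝ → ℝ) (A : Matrix m n 𝕜) (B : Matrix n m 𝕜) :
    Fintype.card n * f 0 + traceFun f (A * B) = Fintype.card m * f 0 + traceFun f (B * A) := by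
  have hne (k : ℕ) {p : Polynomial 𝕜} (hp : p.Monic) : Polynomial.X ^ k * p ≠ 0 :=
    ((Polynomial.monic_X_pow k).mul hp).ne_zero
  simpa [Polynomial.roots_mul (hne _ (charpoly_monic _)), traceFun, Multiset.map_nsmul,
    Multiset.sum_nsmul] using
    congrArg (fun p => (p.roots.map fun z => f (RCLike.re z)).sum) (charpoly_mul_comm' A B)

theorem traceFun_conjStarAlgAut (f : ℝ → ℝ) (U : unitaryGroup n 𝕜) (A : Matrix n n 𝕜) :
    traceFun f (conjStarAlgAut 𝕜 _ U A) = traceFun f A := by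
  rw [traceFun, charpoly_conjStarAlgAut, traceFun]

theorem traceFun_smul (f : ℝ → ℝ) {A : Matrix n n 𝕜} (hA : A.IsHermitian) (l : ℝ) :
    traceFun f (l • A) = traceFun (fun x => f (l * x)) A := by
  rw [RCLike.real_smul_eq_coe_smul (K := 𝕜),
    ← traceFun_conjStarAlgAut f (star hA.eigenvectorUnitary), map_smul,
    hA.conjStarAlgAut_star_eigenvectorUnitary, ← diagonal_smul, traceFun_diagonal,
    traceFun_eq_sum_eigenvalues _ hA]
  simp

theorem sum_norm_sq_row_unitaryGroup (U : unitaryGroup n 𝕜) (i : n) : ∑ j, ‖U i j‖ ^ 2 = 1 := by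
  have hdiag := re_mul_diagonal_mul_conjTranspose_apply_self (U : Matrix n n 𝕜) 1 i
  rw [← star_eq_conjTranspose] at hdiag
  simpa [Function.comp_def] using hdiag.symm

theorem sum_norm_sq_col_unitaryGroup (U : unitaryGroup n 𝕜) (j : n) : ∑ i, ‖U i j‖ ^ 2 = 1 := by
  simpa [star_apply] using sum_norm_sq_row_unitaryGroup (star U) j

/-- Peierls' inequality. -/
theorem traceFun_le_sum_diag {f : ℝ → ℝ} {s : Set ℝ} (hf : ConcaveOn ℝ s f) {A : Matrix n n 𝕜}
    (hA : A.IsHermitian) (hs : ∀ i, hA.eigenvalues i ∈ s) :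
    traceFun f A ≤ ∑ i, f (RCLike.re (A i i)) := by
  set U := hA.eigenvectorUnitary
  set μ := hA.eigenvalues
  have hdiag (i : n) : RCLike.re (A i i) = ∑ j, ‖U i j‖ ^ 2 * μ j := by
    conv_lhs => rw [hA.spectral_theorem, conjStarAlgAut_apply]
    exact re_mul_diagonal_mul_conjTranspose_apply_self _ _ _
  calc traceFun f A = ∑ j, f (μ j) := traceFun_eq_sum_eigenvalues f hA
    _ = ∑ j, ∑ i, ‖U i j‖ ^ 2 * f (μ j) := by
      simp only [← Finset.sum_mul, sum_norm_sq_col_unitaryGroup, one_mul]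
    _ = ∑ i, ∑ j, ‖U i j‖ ^ 2 * f (μ j) := Finset.sum_comm
    _ ≤ ∑ i, f (RCLike.re (A i i)) := by
      gcongr with i
      rw [hdiag]
      exact hf.le_map_sum (fun _ _ => by positivity) (sum_norm_sq_row_unitaryGroup U i)
        fun j _ => hs j

theorem exists_mul_conjTranspose_eq_and_conjTranspose_mul_eq_diagonal {P : Matrix n n 𝕜}
    (hP : P.PosSemidef) :
    ∃ B : Matrix n n 𝕜, B * Bᴴ = P ∧
      Bᴴ * B = diagonal (RCLike.ofReal ∘ hP.isHermitian.eigenvalues) := by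
  set U := hP.isHermitian.eigenvectorUnitary
  set μ := hP.isHermitian.eigenvalues with hμ
  set D : Matrix n n 𝕜 := diagonal (RCLike.ofReal ∘ fun i => √(μ i)) with hD
  have hD_herm : Dᴴ = D := by
    simp [hD, diagonal_conjTranspose, Function.comp_def, Pi.star_def]
  have hD_sq : D * D = diagonal (RCLike.ofReal ∘ μ) := by
    simp [hD, diagonal_mul_diagonal, Function.comp_def, ← RCLike.ofReal_mul,
      Real.mul_self_sqrt (hP.eigenvalues_nonneg _), hμ]
  refine ⟨U * D, ?_, ?_⟩
  · rw [conjTranspose_mul, hD_herm, Matrix.mul_assoc, ← Matrix.mul_assoc D, hD_sq,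
      ← Matrix.mul_assoc]
    exact hP.isHermitian.spectral_theorem.symm
  · rw [conjTranspose_mul, hD_herm, Matrix.mul_assoc, ← Matrix.mul_assoc _ (U : Matrix n n 𝕜) D,
      ← star_eq_conjTranspose, coe_star_mul_self, Matrix.one_mul, hD_sq]

/-- Rotfel'd's inequality. -/
theorem traceFun_add_le {f : ℝ → ℝ} (hf : ConcaveOn ℝ (Set.Ici 0) f) (hf₀ : 0 ≤ f 0)
    {P Q : Matrix n n 𝕜} (hP : P.PosSemidef) (hQ : Q.PosSemidef) :
    traceFun f (P + Q) ≤ traceFun f P + traceFun f Q := by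
  obtain ⟨B, hB, hB'⟩ := exists_mul_conjTranspose_eq_and_conjTranspose_mul_eq_diagonal hP
  obtain ⟨C, hC, hC'⟩ := exists_mul_conjTranspose_eq_and_conjTranspose_mul_eq_diagonal hQ
  set W := fromCols B C
  have hadd : W * Wᴴ = P + Q := by
    rw [conjTranspose_fromCols_eq_fromRows_conjTranspose, fromCols_mul_fromRows, hB, hC]
  have hgram : Wᴴ * W = fromBlocks (Bᴴ * B) (Bᴴ * C) (Cᴴ * B) (Cᴴ * C) := by
    rw [conjTranspose_fromCols_eq_fromRows_conjTranspose, fromRows_mul_fromCols]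
  have hW := posSemidef_conjTranspose_mul_self W
  calc traceFun f (P + Q)
      ≤ Fintype.card n * f 0 + traceFun f (P + Q) := le_add_of_nonneg_left (by positivity)
    _ = traceFun f (Wᴴ * W) := by
      have hcomm := traceFun_mul_comm f W Wᴴ
      rw [hadd, Fintype.card_sum] at hcomm
      push_cast at hcomm
      linarith
    _ ≤ ∑ i, f (RCLike.re ((Wᴴ * W) i i)) :=
      traceFun_le_sum_diag hf hW.isHermitian hW.eigenvalues_nonneg
    _ = traceFun f P + traceFun f Q := by
      simp [hgram, hB', hC', traceFun_eq_sum_eigenvalues f hP.isHermitian,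
        traceFun_eq_sum_eigenvalues f hQ.isHermitian]

end TraceFun

section Entropy

open Real Unitary

variable {n : Type*} [Fintype n]

theorem re_trace_nonneg {A : Matrix n n ℂ} (hA : A.PosSemidef) : 0 ≤ A.trace.re :=
  (Complex.le_def.1 hA.trace_nonneg).1

variable [DecidableEq n]

theorem vnEnt_eq_traceFun_sub {A : Matrix n n ℂ} (hA : A.IsHermitian) :
    vnEnt A = traceFun negMulLog A - negMulLog A.trace.re := by
  simp [vnEnt, hA, traceFun_eq_sum_eigenvalues _ hA, hA.trace_eq_sum_eigenvalues]

theorem vnEnt_smul {A : Matrix n n ℂ} (hA : A.IsHermitian) (l : ℝ) :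
    vnEnt (l • A) = l * vnEnt A := by
  have htrace : A.trace.re = ∑ i, hA.eigenvalues i := by simp [hA.trace_eq_sum_eigenvalues]
  rw [vnEnt_eq_traceFun_sub hA, vnEnt_eq_traceFun_sub (hA.smul (IsSelfAdjoint.all l)),
    traceFun_smul _ hA, traceFun_eq_sum_eigenvalues _ hA, traceFun_eq_sum_eigenvalues _ hA,
    trace_smul, Complex.smul_re, smul_eq_mul, htrace]
  simp only [negMulLog_mul, Finset.sum_add_distrib, ← Finset.sum_mul, ← Finset.mul_sum]
  ring

theorem vnEnt_le_sum_diag_conjStarAlgAut {A : Matrix n n ℂ} (hA : A.PosSemidef)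
    (U : unitaryGroup n ℂ) :
    vnEnt A ≤ ∑ i, negMulLog (conjStarAlgAut ℂ _ U A i i).re - negMulLog A.trace.re := by
  have hUA : (conjStarAlgAut ℂ _ U A).PosSemidef := hA.mul_mul_conjTranspose_same _
  rw [vnEnt_eq_traceFun_sub hA.isHermitian, ← traceFun_conjStarAlgAut _ U]
  gcongr
  exact traceFun_le_sum_diag concaveOn_negMulLog hUA.isHermitian hUA.eigenvalues_nonneg

theorem vnEnt_add_vnEnt_le {P Q : Matrix n n ℂ} (hP : P.PosSemidef) (hQ : Q.PosSemidef) :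
    vnEnt P + vnEnt Q ≤ vnEnt (P + Q) := by
  have hR := (hP.add hQ).isHermitian
  set U := star hR.eigenvectorUnitary
  set p : n → ℝ := fun i => (conjStarAlgAut ℂ _ U P i i).re with hp
  set q : n → ℝ := fun i => (conjStarAlgAut ℂ _ U Q i i).re with hq
  have hdiag_nonneg {A : Matrix n n ℂ} (hA : A.PosSemidef) (i : n) :
      0 ≤ (conjStarAlgAut ℂ _ U A i i).re :=
    (Complex.le_def.1 (hA.mul_mul_conjTranspose_same (U : Matrix n n ℂ)).diag_nonneg).1
  have hsum_diag (A : Matrix n n ℂ) : ∑ i, (conjStarAlgAut ℂ _ U A i i).re = A.trace.re := by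
    rw [← trace_conjStarAlgAut U, trace, Complex.re_sum]
    rfl
  have heigenvalues (i : n) : hR.eigenvalues i = p i + q i := by
    rw [hp, hq, ← Complex.add_re, ← Matrix.add_apply, ← map_add,
      hR.conjStarAlgAut_star_eigenvectorUnitary]
    simp
  have hmix := sum_mixEntropy_le Finset.univ (fun i _ => hdiag_nonneg hP i)
    (fun i _ => hdiag_nonneg hQ i)
  simp only [mixEntropy, Finset.sum_add_distrib, Finset.sum_sub_distrib, hsum_diag] at hmix
  have hPle := vnEnt_le_sum_diag_conjStarAlgAut hP U
  have hQle := vnEnt_le_sum_diag_conjStarAlgAut hQ U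
  rw [vnEnt_eq_traceFun_sub hR, traceFun_eq_sum_eigenvalues _ hR, trace_add, Complex.add_re]
  simp only [heigenvalues]
  linarith

theorem vnEnt_add_le {P Q : Matrix n n ℂ} (hP : P.PosSemidef) (hQ : Q.PosSemidef) :
    vnEnt (P + Q) ≤ vnEnt P + vnEnt Q + mixEntropy P.trace.re Q.trace.re := by
  have hsub := traceFun_add_le concaveOn_negMulLog negMulLog_zero.ge hP hQ
  rw [vnEnt_eq_traceFun_sub hP.isHermitian, vnEnt_eq_traceFun_sub hQ.isHermitian,
    vnEnt_eq_traceFun_sub (hP.add hQ).isHermitian, trace_add, Complex.add_re, mixEntropy]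
  linarith

end Entropy

section PartialTrace

variable {m n ι R : Type*} [Fintype ι]

/-- The partial trace over the factor `ι` of an operator on `Rⁿ ≅ Rᵐ ⊗ R^ι`, the tensor
decomposition being given by a bijection `m × ι ≃ n` of index types. -/
def partialTrace [AddCommMonoid R] (e : m × ι ≃ n) (A : Matrix n n R) : Matrix m m R :=
  ∑ k, A.submatrix (fun i => e (i, k)) fun i => e (i, k)

theorem partialTrace_add [AddCommMonoid R] (e : m × ι ≃ n) (A B : Matrix n n R) :
    partialTrace e (A + B) = partialTrace e A + partialTrace e B := by
  simp [partialTrace, submatrix_add, Finset.sum_add_distrib]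

theorem partialTrace_smul {S : Type*} [AddCommMonoid R] [DistribSMul S R] (e : m × ι ≃ n) (s : S)
    (A : Matrix n n R) : partialTrace e (s • A) = s • partialTrace e A := by
  ext i j
  simp [partialTrace, Matrix.sum_apply, Finset.smul_sum]

theorem trace_partialTrace [AddCommMonoid R] [Fintype m] [Fintype n] (e : m × ι ≃ n)
    (A : Matrix n n R) : (partialTrace e A).trace = A.trace := by
  calc (partialTrace e A).trace = ∑ k, ∑ i, A (e (i, k)) (e (i, k)) := trace_sum _ _
    _ = ∑ x : m × ι, A (e x) (e x) := (Fintype.sum_prod_type_right fun x => A (e x) (e x)).symm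
    _ = A.trace := e.sum_comp fun j => A j j

theorem isHermitian_partialTrace [AddCommMonoid R] [StarAddMonoid R] (e : m × ι ≃ n)
    {A : Matrix n n R} (hA : A.IsHermitian) : (partialTrace e A).IsHermitian := by
  rw [IsHermitian, partialTrace, conjTranspose_sum]
  simp only [conjTranspose_submatrix, hA.eq]

theorem posSemidef_partialTrace [Ring R] [PartialOrder R] [StarRing R] [AddLeftMono R]
    (e : m × ι ≃ n) {A : Matrix n n R} (hA : A.PosSemidef) : (partialTrace e A).PosSemidef :=
  posSemidef_sum _ fun _ _ => hA.submatrix _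

end PartialTrace

section ConditionalMutualInformation

variable {a b c : Type*}

theorem mAB_eq_partialTrace [Fintype c] (ω : Matrix (a × b × c) (a × b × c) ℂ) :
    mAB ω = partialTrace (Equiv.prodAssoc a b c) ω := by
  ext p q
  simp [mAB, partialTrace, Matrix.sum_apply]

theorem mBC_eq_partialTrace [Fintype a] (ω : Matrix (a × b × c) (a × b × c) ℂ) :
    mBC ω = partialTrace (Equiv.prodComm (b × c) a) ω := by
  ext p q
  simp [mBC, partialTrace, Matrix.sum_apply]

/-- The bijection that singles out the middle tensor factor, so that `mB` is a partial trace. -/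
def prodLeftComm (a b c : Type*) : a × b × c ≃ b × a × c where
  toFun x := (x.2.1, x.1, x.2.2)
  invFun x := (x.2.1, x.1, x.2.2)

theorem mB_eq_partialTrace [Fintype a] [Fintype c] (ω : Matrix (a × b × c) (a × b × c) ℂ) :
    mB ω = partialTrace (prodLeftComm b a c) ω := by
  ext i j
  simp [mB, prodLeftComm, partialTrace, Matrix.sum_apply, Fintype.sum_prod_type]

variable [Fintype a] [DecidableEq a] [Fintype b] [DecidableEq b] [Fintype c] [DecidableEq c]

theorem cmi_smul {ρ : Matrix (a × b × c) (a × b × c) ℂ} (hρ : ρ.IsHermitian) (l : ℝ) :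
    cmi (l • ρ) = l * cmi ρ := by
  simp only [cmi, mAB_eq_partialTrace, mBC_eq_partialTrace, mB_eq_partialTrace, partialTrace_smul,
    vnEnt_smul hρ, vnEnt_smul (isHermitian_partialTrace _ hρ)]
  ring

theorem cmi_add_cmi_le {ρ σ : Matrix (a × b × c) (a × b × c) ℂ} (hρ : ρ.PosSemidef)
    (hσ : σ.PosSemidef) :
    cmi ρ + cmi σ ≤ cmi (ρ + σ) + 2 * mixEntropy ρ.trace.re σ.trace.re := by
  simp only [cmi, mAB_eq_partialTrace, mBC_eq_partialTrace, mB_eq_partialTrace, partialTrace_add]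
  have hAB := vnEnt_add_vnEnt_le (posSemidef_partialTrace (Equiv.prodAssoc a b c) hρ)
    (posSemidef_partialTrace (Equiv.prodAssoc a b c) hσ)
  have hBC := vnEnt_add_vnEnt_le (posSemidef_partialTrace (Equiv.prodComm (b × c) a) hρ)
    (posSemidef_partialTrace (Equiv.prodComm (b × c) a) hσ)
  have hABC := vnEnt_add_le hρ hσ
  have hB := vnEnt_add_le (posSemidef_partialTrace (prodLeftComm b a c) hρ)
    (posSemidef_partialTrace (prodLeftComm b a c) hσ)
  rw [trace_partialTrace, trace_partialTrace] at hB
  linarith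

theorem cmi_convex_combination_general {ρ σ : Matrix (a × b × c) (a × b × c) ℂ}
    (hρ : ρ.PosSemidef) (hσ : σ.PosSemidef) {s t : ℝ} (hs : 0 ≤ s) (ht : 0 ≤ t) :
    s * cmi ρ + t * cmi σ ≤
      cmi (s • ρ + t • σ) + 2 * mixEntropy (s * ρ.trace.re) (t * σ.trace.re) := by
  simpa only [cmi_smul hρ.isHermitian, cmi_smul hσ.isHermitian, trace_smul, Complex.smul_re,
    smul_eq_mul] using cmi_add_cmi_le (hρ.smul hs) (hσ.smul ht)

end ConditionalMutualInformation

/-- Almost-convexity inequality for the conditional mutual information on the positive cone: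
`λ I(A:C|B)_ρ + (1−λ) I(A:C|B)_σ ≤ I(A:C|B)_{λρ+(1−λ)σ} + 2h₂(λ)`. -/
theorem cmi_convex_combination {a b c : Type*} [Fintype a] [DecidableEq a] [Fintype b]
    [DecidableEq b] [Fintype c] [DecidableEq c]
    (ρ σ : Matrix (a × b × c) (a × b × c) ℂ) (hρ : ρ.PosSemidef) (hσ : σ.PosSemidef)
    (hρ1 : ρ.trace.re ≤ 1) (hσ1 : σ.trace.re ≤ 1)
    (l : ℝ) (h0 : 0 ≤ l) (h1 : l ≤ 1) :
    l * cmi ρ + (1 - l) * cmi σ ≤ cmi (l • ρ + (1 - l) • σ) + 2 * Real.binEntropy l :=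
  (cmi_convex_combination_general hρ hσ h0 (sub_nonneg.2 h1)).trans <| by
    gcongr
    exact mixEntropy_mul_le_binEntropy h0 h1 (re_trace_nonneg hρ) hρ1 (re_trace_nonneg hσ) hσ1
end
end

section
/- For any state ω of a finite-dimensional n-partite system A₁...Aₙ with at least one marginal entropy H(ω_{A_i}) finite, the quantum interaction information Iₙ(ω) = Σ_i H(ω_{A_i}) − Σ_{i<j} H(ω_{A_iA_j}) + Σ_{i<j<k} H(ω_{A_iA_jA_k}) − ... − (−1)ⁿH(ω_{A₁...Aₙ}) satisfies |Iₙ(ω)| ≤ 2^{n−1} min{H(ω_{A₁}), ..., H(ω_{Aₙ})}. -/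
open Matrix
open scoped ComplexOrder

noncomputable section

section Multipartite

variable {N : ℕ} {α : Fin N → Type*}
  [∀ i, Fintype (α i)] [∀ i, DecidableEq (α i)]

/-- The marginal of an operator on `A₁ ⊗ ... ⊗ A_N` on the subsystems in `S`
(all subsystems outside `S` are traced out). -/
def marg (S : Finset (Fin N)) (ω : Matrix (∀ i, α i) (∀ i, α i) ℂ) :
    Matrix (∀ i : {x : Fin N // x ∈ S}, α i.1) (∀ i : {x : Fin N // x ∈ S}, α i.1) ℂ :=
  Matrix.of fun p q =>
    ∑ g : ∀ i : {x : Fin N // x ∉ S}, α i.1,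
      ω (fun i => if h : i ∈ S then p ⟨i, h⟩ else g ⟨i, h⟩)
        (fun i => if h : i ∈ S then q ⟨i, h⟩ else g ⟨i, h⟩)

end Multipartite

/-- The quantum interaction information
`I_N(ω) = Σ_i H(ω_{A_i}) − Σ_{i<j} H(ω_{A_iA_j}) + ... − (−1)^N H(ω_{A₁...A_N})`,
i.e. `−Σ_{∅≠S} (−1)^{|S|} H(ω_S)`. -/
def interInfo {N : ℕ} {α : Fin N → Type*} [∀ i, Fintype (α i)] [∀ i, DecidableEq (α i)]
    (ω : Matrix (∀ i, α i) (∀ i, α i) ℂ) : ℝ :=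
  -∑ S ∈ Finset.univ.powerset.filter (fun S : Finset (Fin N) => S.Nonempty),
      (-1 : ℝ) ^ S.card * vnEnt (marg S ω)

/-!
Fix a subsystem `i`. Pairing each set `S` of other subsystems with `{i} ∪ S` writes the interaction
information as an alternating sum of the `2 ^ (N - 1)` conditional entropies
`H(A_i | S) = H(A_i S) - H(S)`, so it suffices that each of these is at most `H(A_i)` in absolute
value. The upper bound is subadditivity of the entropy. The lower bound (Araki–Lieb) is
subadditivity for a marginal of a purification, as complementary marginals of a pure state have the
same entropy.

Subadditivity reduces to Gibbs' inequality for the diagonal in a product of eigenbases of the two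
marginals: by the spectral theorem a diagonal is a doubly stochastic image of the spectrum, so by
concavity passing to it does not decrease the entropy.
-/

open scoped Kronecker

section ShannonEntropy

variable {ι m n : Type*} [Fintype ι] [Fintype m] [Fintype n]

/-- The Shannon entropy of a finitely supported positive measure, extended from probability vectors
to the positive cone as in `vnEnt`, so that the entropy of a matrix is that of its spectrum. -/
def shannonEnt (p : ι → ℝ) : ℝ :=
  ∑ i, Real.negMulLog (p i) - Real.negMulLog (∑ i, p i)

theorem shannonEnt_of_subsingleton [Subsingleton ι] (p : ι → ℝ) : shannonEnt p = 0 := by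
  cases isEmpty_or_nonempty ι
  · simp [shannonEnt]
  · have := uniqueOfSubsingleton (Classical.arbitrary ι)
    simp [shannonEnt]

theorem negMulLog_le_neg_mul_log_add_sub {d q : ℝ} (hd : 0 ≤ d) (hq : 0 ≤ q)
    (hdq : d ≠ 0 → q ≠ 0) : Real.negMulLog d ≤ -(d * Real.log q) + (q - d) := by
  rcases hd.eq_or_lt with rfl | hd
  · simpa using hq
  have hq : 0 < q := hq.lt_of_ne' (hdq hd.ne')
  have h := mul_le_mul_of_nonneg_left (Real.log_le_sub_one_of_pos (div_pos hq hd)) hd.le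
  rw [Real.log_div hq.ne' hd.ne', mul_sub, mul_sub, mul_div_cancel₀ q hd.ne', mul_one] at h
  rw [Real.negMulLog]
  linarith

theorem sum_negMulLog_le_neg_sum_mul_log {d q : ι → ℝ} (hd : ∀ i, 0 ≤ d i) (hq : ∀ i, 0 ≤ q i)
    (hdq : ∀ i, d i ≠ 0 → q i ≠ 0) (hsum : ∑ i, q i ≤ ∑ i, d i) :
    ∑ i, Real.negMulLog (d i) ≤ -∑ i, d i * Real.log (q i) :=
  calc ∑ i, Real.negMulLog (d i)
      ≤ ∑ i, (-(d i * Real.log (q i)) + (q i - d i)) :=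
        Finset.sum_le_sum fun i _ => negMulLog_le_neg_mul_log_add_sub (hd i) (hq i) (hdq i)
    _ = -∑ i, d i * Real.log (q i) + (∑ i, q i - ∑ i, d i) := by
        rw [Finset.sum_add_distrib, Finset.sum_neg_distrib, Finset.sum_sub_distrib]
    _ ≤ -∑ i, d i * Real.log (q i) := by linarith

theorem mul_log_mul_div {d p q t : ℝ} (h : d ≠ 0 → p ≠ 0 ∧ q ≠ 0 ∧ t ≠ 0) :
    d * Real.log (p * q / t) = d * Real.log p + d * Real.log q - d * Real.log t := by
  rcases eq_or_ne d 0 with rfl | hd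
  · simp
  · obtain ⟨hp, hq, ht⟩ := h hd
    rw [Real.log_div (mul_ne_zero hp hq) ht, Real.log_mul hp hq]
    ring

/-- Gibbs' inequality is applied to `d` and the normalised product `p i * q j / t` of its
marginals. -/
theorem shannonEnt_le_add_marginals {d : m × n → ℝ} (hd : ∀ x, 0 ≤ d x) :
    shannonEnt d ≤ shannonEnt (fun i => ∑ j, d (i, j)) + shannonEnt (fun j => ∑ i, d (i, j)) := by
  set p : m → ℝ := fun i => ∑ j, d (i, j)
  set q : n → ℝ := fun j => ∑ i, d (i, j)
  set t : ℝ := ∑ x, d x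
  have hp : ∑ i, p i = t := (Fintype.sum_prod_type d).symm
  have hq : ∑ j, q j = t := (Fintype.sum_prod_type_right d).symm
  have hdp (x : m × n) : d x ≤ p x.1 :=
    Finset.single_le_sum (f := fun j => d (x.1, j)) (fun _ _ => hd _) (Finset.mem_univ x.2)
  have hdq (x : m × n) : d x ≤ q x.2 :=
    Finset.single_le_sum (f := fun i => d (i, x.2)) (fun _ _ => hd _) (Finset.mem_univ x.1)
  have hdt (x : m × n) : d x ≤ t :=
    Finset.single_le_sum (f := d) (fun _ _ => hd _) (Finset.mem_univ x)
  have hne (x : m × n) (hx : d x ≠ 0) : p x.1 ≠ 0 ∧ q x.2 ≠ 0 ∧ t ≠ 0 :=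
    have hx := (hd x).lt_of_ne' hx
    ⟨(hx.trans_le (hdp x)).ne', (hx.trans_le (hdq x)).ne', (hx.trans_le (hdt x)).ne'⟩
  have hprod : ∑ x : m × n, p x.1 * q x.2 / t = t := by
    rw [← Finset.sum_div, Fintype.sum_prod_type, ← Finset.sum_mul_sum, hp, hq, mul_self_div_self]
  have hlog : ∑ x, d x * Real.log (p x.1 * q x.2 / t) =
      ∑ i, p i * Real.log (p i) + ∑ j, q j * Real.log (q j) - t * Real.log t := by
    simp only [fun x => mul_log_mul_div (hne x), Finset.sum_sub_distrib, Finset.sum_add_distrib]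
    rw [Fintype.sum_prod_type, Fintype.sum_prod_type_right, ← Finset.sum_mul]
    simp only [← Finset.sum_mul, p, q, t]
  have hgibbs := sum_negMulLog_le_neg_sum_mul_log hd
    (fun x => div_nonneg (mul_nonneg ((hd x).trans (hdp x)) ((hd x).trans (hdq x)))
      ((hd x).trans (hdt x)))
    (fun x hx => div_ne_zero (mul_ne_zero (hne x hx).1 (hne x hx).2.1) (hne x hx).2.2) hprod.le
  simp only [shannonEnt, hp, hq, Real.negMulLog, neg_mul, Finset.sum_neg_distrib] at hgibbs ⊢
  linarith

end ShannonEntropy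

section DoublyStochastic

variable {n : Type*} [Fintype n] [DecidableEq n]

theorem sum_le_sum_mulVec_of_mem_doublyStochastic {𝕜 : Type*} [Field 𝕜] [LinearOrder 𝕜]
    [IsStrictOrderedRing 𝕜] {M : Matrix n n 𝕜} (hM : M ∈ doublyStochastic 𝕜 n) {s : Set 𝕜}
    {f : 𝕜 → 𝕜} (hf : ConcaveOn 𝕜 s f) {x : n → 𝕜} (hx : ∀ i, x i ∈ s) :
    ∑ i, f (x i) ≤ ∑ i, f ((M *ᵥ x) i) :=
  calc ∑ j, f (x j) = ∑ i, ∑ j, M i j * f (x j) := by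
        rw [Finset.sum_comm]
        simp only [← Finset.sum_mul, sum_col_of_mem_doublyStochastic hM, one_mul]
    _ ≤ ∑ i, f ((M *ᵥ x) i) := Finset.sum_le_sum fun i _ =>
        hf.le_map_sum (fun _ _ => nonneg_of_mem_doublyStochastic hM)
          (sum_row_of_mem_doublyStochastic hM i) fun j _ => hx j

theorem shannonEnt_le_shannonEnt_mulVec {M : Matrix n n ℝ} (hM : M ∈ doublyStochastic ℝ n)
    {x : n → ℝ} (hx : ∀ i, 0 ≤ x i) : shannonEnt x ≤ shannonEnt (M *ᵥ x) := by
  rw [shannonEnt, shannonEnt, sum_mulVec_of_mem_doublyStochastic hM]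
  exact sub_le_sub_right
    (sum_le_sum_mulVec_of_mem_doublyStochastic hM Real.concaveOn_negMulLog hx) _

variable {𝕜 : Type*} [RCLike 𝕜]

theorem map_norm_sq_mem_doublyStochastic (U : unitaryGroup n 𝕜) :
    (U : Matrix n n 𝕜).map (‖·‖ ^ 2) ∈ doublyStochastic ℝ n := by
  refine mem_doublyStochastic_iff_sum.2 ⟨fun i j => sq_nonneg _, fun i => ?_, fun j => ?_⟩
  · have hU : (U : Matrix n n 𝕜) * star (U : Matrix n n 𝕜) = 1 := Unitary.coe_mul_star_self U
    have h := congrFun₂ hU i i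
    simp only [mul_apply, star_apply, one_apply_eq, RCLike.star_def, RCLike.mul_conj] at h
    exact_mod_cast h
  · have hU : star (U : Matrix n n 𝕜) * (U : Matrix n n 𝕜) = 1 := Unitary.coe_star_mul_self U
    have h := congrFun₂ hU j j
    simp only [mul_apply, star_apply, one_apply_eq, RCLike.star_def, RCLike.conj_mul] at h
    exact_mod_cast h

theorem re_diag_eq_mulVec_eigenvalues {A : Matrix n n 𝕜} (hA : A.IsHermitian) :
    (fun i => RCLike.re (A i i)) =
      (hA.eigenvectorUnitary : Matrix n n 𝕜).map (‖·‖ ^ 2) *ᵥ hA.eigenvalues := by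
  funext i
  have h : A i i =
      ((∑ j, ‖(hA.eigenvectorUnitary : Matrix n n 𝕜) i j‖ ^ 2 * hA.eigenvalues j : ℝ) : 𝕜) := by
    conv_lhs => rw [hA.spectral_theorem, Unitary.conjStarAlgAut_apply, mul_apply]
    push_cast
    refine Finset.sum_congr rfl fun j _ => ?_
    rw [mul_diagonal, star_apply, mul_right_comm, RCLike.star_def, RCLike.mul_conj]
    rfl
  rw [h, RCLike.ofReal_re]
  rfl

theorem conjTranspose_eigenvectorUnitary_mul_mul {A : Matrix n n 𝕜} (hA : A.IsHermitian) :
    (hA.eigenvectorUnitary : Matrix n n 𝕜)ᴴ * A * (hA.eigenvectorUnitary : Matrix n n 𝕜) =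
      diagonal (RCLike.ofReal ∘ hA.eigenvalues) := by
  rw [← hA.conjStarAlgAut_star_eigenvectorUnitary, Unitary.conjStarAlgAut_star_apply,
    star_eq_conjTranspose]

end DoublyStochastic

section VonNeumannEntropy

variable {m n : Type*} [Fintype m] [DecidableEq m] [Fintype n] [DecidableEq n]

theorem vnEnt_eq_shannonEnt {A : Matrix n n ℂ} (hA : A.IsHermitian) :
    vnEnt A = shannonEnt hA.eigenvalues :=
  dif_pos hA

theorem vnEnt_of_subsingleton [Subsingleton n] (A : Matrix n n ℂ) : vnEnt A = 0 := by
  by_cases hA : A.IsHermitian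
  · rw [vnEnt_eq_shannonEnt hA, shannonEnt_of_subsingleton]
  · exact dif_neg hA

theorem vnEnt_le_shannonEnt_diag {A : Matrix n n ℂ} (hA : A.PosSemidef) :
    vnEnt A ≤ shannonEnt fun i => (A i i).re := by
  rw [vnEnt_eq_shannonEnt hA.1]
  exact (shannonEnt_le_shannonEnt_mulVec (map_norm_sq_mem_doublyStochastic _)
    hA.eigenvalues_nonneg).trans_eq (congrArg shannonEnt (re_diag_eq_mulVec_eigenvalues hA.1).symm)

theorem sum_eigenvalues_eq_sum_roots_charpoly {𝕜 β : Type*} [RCLike 𝕜] [AddCommMonoid β]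
    {A : Matrix n n 𝕜} (hA : A.IsHermitian) (f : ℝ → β) :
    ∑ i, f (hA.eigenvalues i) = (A.charpoly.roots.map fun z => f (RCLike.re z)).sum := by
  rw [hA.roots_charpoly_eq_eigenvalues, Multiset.map_map]
  simp [Function.comp_def]

theorem sum_map_roots_X_pow_mul {R β : Type*} [CommRing R] [IsDomain R] [AddCommMonoid β]
    {p : Polynomial R} (hp : p ≠ 0) (k : ℕ) {f : R → β} (hf : f 0 = 0) :
    ((Polynomial.X ^ k * p).roots.map f).sum = (p.roots.map f).sum := by
  rw [Polynomial.roots_mul (mul_ne_zero (pow_ne_zero k Polynomial.X_ne_zero) hp)]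
  simp [Multiset.map_nsmul, Multiset.sum_nsmul, hf]

/-- The powers of `X` allow for matrices of different sizes, whose spectra agree up to zeros. -/
theorem vnEnt_eq_of_X_pow_mul_charpoly_eq {A : Matrix m m ℂ} {B : Matrix n n ℂ}
    (hA : A.IsHermitian) (hB : B.IsHermitian) (a b : ℕ)
    (h : Polynomial.X ^ a * A.charpoly = Polynomial.X ^ b * B.charpoly) :
    vnEnt A = vnEnt B := by
  have hsum (f : ℝ → ℝ) (hf : f 0 = 0) :
      ∑ i, f (hA.eigenvalues i) = ∑ i, f (hB.eigenvalues i) := by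
    have hf : f (RCLike.re (0 : ℂ)) = 0 := by rw [map_zero, hf]
    rw [sum_eigenvalues_eq_sum_roots_charpoly, sum_eigenvalues_eq_sum_roots_charpoly,
      ← sum_map_roots_X_pow_mul A.charpoly_monic.ne_zero a hf, h,
      sum_map_roots_X_pow_mul B.charpoly_monic.ne_zero b hf]
  rw [vnEnt_eq_shannonEnt hA, vnEnt_eq_shannonEnt hB, shannonEnt, shannonEnt,
    hsum _ Real.negMulLog_zero, hsum (fun x => x) rfl]

theorem vnEnt_eq_of_charpoly_eq {A : Matrix m m ℂ} {B : Matrix n n ℂ} (hA : A.IsHermitian)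
    (hB : B.IsHermitian) (h : A.charpoly = B.charpoly) : vnEnt A = vnEnt B :=
  vnEnt_eq_of_X_pow_mul_charpoly_eq hA hB 0 0 (by rw [h])

theorem vnEnt_transpose {A : Matrix n n ℂ} (hA : A.IsHermitian) : vnEnt Aᵀ = vnEnt A :=
  vnEnt_eq_of_charpoly_eq hA.transpose hA A.charpoly_transpose

theorem vnEnt_submatrix_equiv {A : Matrix n n ℂ} (hA : A.IsHermitian) (e : m ≃ n) :
    vnEnt (A.submatrix e e) = vnEnt A :=
  vnEnt_eq_of_charpoly_eq (hA.submatrix e) hA (charpoly_reindex e.symm A)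

theorem vnEnt_mul_conjTranspose (M : Matrix m n ℂ) : vnEnt (M * Mᴴ) = vnEnt (Mᴴ * M) :=
  vnEnt_eq_of_X_pow_mul_charpoly_eq (isHermitian_mul_conjTranspose_self M)
    (isHermitian_conjTranspose_mul_self M) _ _ (charpoly_mul_comm' M Mᴴ)

theorem vnEnt_conj_unitary {A : Matrix n n ℂ} (hA : A.IsHermitian) (U : unitaryGroup n ℂ) :
    vnEnt ((U : Matrix n n ℂ)ᴴ * A * (U : Matrix n n ℂ)) = vnEnt A :=
  vnEnt_eq_of_charpoly_eq (isHermitian_conjTranspose_mul_mul _ hA) hA <| by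
    have hU : (U : Matrix n n ℂ) * (U : Matrix n n ℂ)ᴴ = 1 := Unitary.coe_mul_star_self U
    rw [charpoly_mul_comm, ← mul_assoc, hU, one_mul]

end VonNeumannEntropy

section PartialTrace

variable {m m' n n' r R : Type*}

/-- The partial trace over the second tensor factor. -/
def ptraceRight [Fintype n] [AddCommMonoid R] (ρ : Matrix (m × n) (m × n) R) : Matrix m m R :=
  of fun i i' => ∑ j, ρ (i, j) (i', j)

/-- The partial trace over the first tensor factor. -/
def ptraceLeft [Fintype m] [AddCommMonoid R] (ρ : Matrix (m × n) (m × n) R) : Matrix n n R :=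
  of fun j j' => ∑ i, ρ (i, j) (i, j')

theorem ptraceLeft_eq_ptraceRight_swap [Fintype m] [AddCommMonoid R]
    (ρ : Matrix (m × n) (m × n) R) :
    ptraceLeft ρ = ptraceRight (ρ.submatrix (Equiv.prodComm n m) (Equiv.prodComm n m)) :=
  rfl

theorem posSemidef_ptraceRight [Fintype n] [Ring R] [PartialOrder R] [StarRing R] [AddLeftMono R]
    {ρ : Matrix (m × n) (m × n) R} (hρ : ρ.PosSemidef) : (ptraceRight ρ).PosSemidef := by
  have h : ptraceRight ρ = ∑ j, ρ.submatrix (·, j) (·, j) := by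
    ext i i'
    simp [ptraceRight, Matrix.sum_apply]
  rw [h]
  exact posSemidef_sum _ fun j _ => hρ.submatrix _

theorem posSemidef_ptraceLeft [Fintype m] [Ring R] [PartialOrder R] [StarRing R] [AddLeftMono R]
    {ρ : Matrix (m × n) (m × n) R} (hρ : ρ.PosSemidef) : (ptraceLeft ρ).PosSemidef :=
  posSemidef_ptraceRight (hρ.submatrix (Equiv.prodComm n m))

/-- The bipartition `(m × r) | n` of the tripartite vector whose bipartition `(m × n) | r` is `M`.
For a purification `M` of `ρ = M * Mᴴ` it exchanges the roles of the second factor and of the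
purifying system. -/
def repartition (M : Matrix (m × n) r R) : Matrix (m × r) n R :=
  of fun x j => M (x.1, j) x.2

theorem repartition_repartition (M : Matrix (m × n) r R) : repartition (repartition M) = M :=
  rfl

theorem ptraceRight_repartition_mul_conjTranspose [Fintype n] [Fintype r] [NonUnitalSemiring R]
    [StarRing R] (M : Matrix (m × n) r R) :
    ptraceRight (repartition M * (repartition M)ᴴ) = ptraceRight (M * Mᴴ) := by
  ext i i'
  simp only [ptraceRight, of_apply, mul_apply, conjTranspose_apply, repartition]
  exact Finset.sum_comm

theorem ptraceLeft_mul_conjTranspose [Fintype m] [Fintype r] [CommSemiring R] [StarRing R]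
    (M : Matrix (m × n) r R) :
    ptraceLeft (M * Mᴴ) = ((repartition M)ᴴ * repartition M)ᵀ := by
  ext j j'
  simp only [ptraceLeft, of_apply, mul_apply, transpose_apply, conjTranspose_apply, repartition,
    Fintype.sum_prod_type, mul_comm]

variable [Fintype m] [Fintype n]

theorem trace_mul_kronecker_one [NonAssocSemiring R] [DecidableEq n]
    (ρ : Matrix (m × n) (m × n) R) (P : Matrix m m R) :
    (ρ * (P ⊗ₖ (1 : Matrix n n R))).trace = (ptraceRight ρ * P).trace := by
  simp only [trace, diag_apply, mul_apply, ptraceRight, of_apply, Fintype.sum_prod_type,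
    kroneckerMap_apply, one_apply, mul_ite, mul_one, mul_zero, Finset.sum_ite_eq',
    Finset.mem_univ, if_true, Finset.sum_mul]
  exact Finset.sum_congr rfl fun i _ => Finset.sum_comm

theorem ptraceRight_conj_kronecker [Finite m'] [Fintype n'] [DecidableEq n] [CommSemiring R]
    [StarRing R] (ρ : Matrix (m × n) (m × n) R) (U : Matrix m m' R) {V : Matrix n n' R}
    (hV : V * Vᴴ = 1) :
    ptraceRight ((U ⊗ₖ V)ᴴ * ρ * (U ⊗ₖ V)) = Uᴴ * ptraceRight ρ * U := by
  classical
  have := Fintype.ofFinite m'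
  refine ext_iff_trace_mul_right.2 fun P => ?_
  calc (ptraceRight ((U ⊗ₖ V)ᴴ * ρ * (U ⊗ₖ V)) * P).trace
      = (ρ * ((U ⊗ₖ V) * (P ⊗ₖ (1 : Matrix n' n' R)) * (U ⊗ₖ V)ᴴ)).trace := by
        rw [← trace_mul_kronecker_one, Matrix.mul_assoc, Matrix.mul_assoc, trace_mul_comm,
          Matrix.mul_assoc]
    _ = (ρ * ((U * P * Uᴴ) ⊗ₖ (1 : Matrix n n R))).trace := by
        rw [conjTranspose_kronecker, ← mul_kronecker_mul, ← mul_kronecker_mul, Matrix.mul_one, hV]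
    _ = (Uᴴ * ptraceRight ρ * U * P).trace := by
        rw [trace_mul_kronecker_one, ← Matrix.mul_assoc, trace_mul_comm]
        simp only [Matrix.mul_assoc]

theorem ptraceLeft_conj_kronecker [Fintype m'] [Finite n'] [DecidableEq m] [CommSemiring R]
    [StarRing R] (ρ : Matrix (m × n) (m × n) R) {U : Matrix m m' R} (V : Matrix n n' R)
    (hU : U * Uᴴ = 1) :
    ptraceLeft ((U ⊗ₖ V)ᴴ * ρ * (U ⊗ₖ V)) = Vᴴ * ptraceLeft ρ * V := by
  have hswap : (U ⊗ₖ V).submatrix (Equiv.prodComm n m) (Equiv.prodComm n' m') = V ⊗ₖ U := by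
    ext
    simp [mul_comm]
  rw [ptraceLeft_eq_ptraceRight_swap, ptraceLeft_eq_ptraceRight_swap,
    ← submatrix_mul_equiv _ _ _ (Equiv.prodComm n m),
    ← submatrix_mul_equiv _ _ _ (Equiv.prodComm n m), ← conjTranspose_submatrix, hswap,
    ptraceRight_conj_kronecker _ _ hU]

end PartialTrace

section Subadditivity

variable {m n r : Type*} [Fintype m] [DecidableEq m] [Fintype n] [DecidableEq n]

theorem vnEnt_le_shannonEnt_diag_ptrace {ρ : Matrix (m × n) (m × n) ℂ} (hρ : ρ.PosSemidef) :
    vnEnt ρ ≤ shannonEnt (fun i => (ptraceRight ρ i i).re) +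
      shannonEnt (fun j => (ptraceLeft ρ j j).re) := by
  have h := shannonEnt_le_add_marginals (d := fun x => (ρ x x).re)
    fun x => (Complex.nonneg_iff.1 hρ.diag_nonneg).1
  simpa [ptraceRight, ptraceLeft] using (vnEnt_le_shannonEnt_diag hρ).trans h

/-- Subadditivity of the von Neumann entropy: pass to a basis in which both marginals are diagonal,
where it is subadditivity of the Shannon entropy. -/
theorem vnEnt_le_add_ptrace {ρ : Matrix (m × n) (m × n) ℂ} (hρ : ρ.PosSemidef) :
    vnEnt ρ ≤ vnEnt (ptraceRight ρ) + vnEnt (ptraceLeft ρ) := by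
  have hA := (posSemidef_ptraceRight hρ).1
  have hB := (posSemidef_ptraceLeft hρ).1
  set U := hA.eigenvectorUnitary
  set V := hB.eigenvectorUnitary
  let W : unitaryGroup (m × n) ℂ := ⟨U.1 ⊗ₖ V.1, kronecker_mem_unitary U.2 V.2⟩
  have hR : ptraceRight (W.1ᴴ * ρ * W.1) = diagonal (RCLike.ofReal ∘ hA.eigenvalues) :=
    (ptraceRight_conj_kronecker ρ U.1 (Unitary.coe_mul_star_self V)).trans
      (conjTranspose_eigenvectorUnitary_mul_mul hA)
  have hL : ptraceLeft (W.1ᴴ * ρ * W.1) = diagonal (RCLike.ofReal ∘ hB.eigenvalues) :=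
    (ptraceLeft_conj_kronecker ρ V.1 (Unitary.coe_mul_star_self U)).trans
      (conjTranspose_eigenvectorUnitary_mul_mul hB)
  have h := vnEnt_le_shannonEnt_diag_ptrace (hρ.conjTranspose_mul_mul_same W.1)
  rw [vnEnt_conj_unitary hρ.1 W, hR, hL] at h
  simpa [vnEnt_eq_shannonEnt hA, vnEnt_eq_shannonEnt hB] using h

variable [Fintype r] [DecidableEq r]

theorem vnEnt_ptraceLeft_mul_conjTranspose (M : Matrix (m × n) r ℂ) :
    vnEnt (ptraceLeft (M * Mᴴ)) = vnEnt (repartition M * (repartition M)ᴴ) := by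
  rw [ptraceLeft_mul_conjTranspose, vnEnt_transpose (isHermitian_conjTranspose_mul_self _),
    vnEnt_mul_conjTranspose]

open scoped MatrixOrder in
/-- The **Araki–Lieb inequality**: subadditivity on a complementary marginal of a purification. -/
theorem vnEnt_ptraceLeft_le {ρ : Matrix (m × n) (m × n) ℂ} (hρ : ρ.PosSemidef) :
    vnEnt (ptraceLeft ρ) ≤ vnEnt (ptraceRight ρ) + vnEnt ρ := by
  obtain ⟨M, rfl⟩ := CStarAlgebra.nonneg_iff_eq_mul_star_self.1 hρ.nonneg
  rw [star_eq_conjTranspose]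
  calc vnEnt (ptraceLeft (M * Mᴴ)) = vnEnt (repartition M * (repartition M)ᴴ) :=
        vnEnt_ptraceLeft_mul_conjTranspose M
    _ ≤ vnEnt (ptraceRight (repartition M * (repartition M)ᴴ)) +
        vnEnt (ptraceLeft (repartition M * (repartition M)ᴴ)) :=
        vnEnt_le_add_ptrace (posSemidef_self_mul_conjTranspose _)
    _ = vnEnt (ptraceRight (M * Mᴴ)) + vnEnt (M * Mᴴ) := by
        rw [ptraceRight_repartition_mul_conjTranspose, vnEnt_ptraceLeft_mul_conjTranspose,
          repartition_repartition]

theorem abs_vnEnt_sub_vnEnt_ptraceLeft_le {ρ : Matrix (m × n) (m × n) ℂ} (hρ : ρ.PosSemidef) :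
    |vnEnt ρ - vnEnt (ptraceLeft ρ)| ≤ vnEnt (ptraceRight ρ) :=
  abs_sub_le_iff.2 ⟨by linarith [vnEnt_le_add_ptrace hρ], by linarith [vnEnt_ptraceLeft_le hρ]⟩

end Subadditivity

section Glue

variable {ι : Type*} {α : ι → Type*} {P Q R : ι → Prop} [DecidablePred P]

/-- Glues a dependent function on `P` and one on `Q` to one on the disjoint union `R` of `P` and
`Q`. Predicates are used rather than finsets so that `Q` may be the complement of a finset. -/
def piSubtypeGlue (hPQ : ∀ i, P i → ¬Q i) (hR : ∀ i, R i ↔ P i ∨ Q i) :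
    (∀ i : {i // P i}, α i) × (∀ i : {i // Q i}, α i) ≃ ∀ i : {i // R i}, α i where
  toFun x i := if hi : P i then x.1 ⟨i, hi⟩ else x.2 ⟨i, ((hR i).1 i.2).resolve_left hi⟩
  invFun y := (fun i => y ⟨i, (hR i).2 (.inl i.2)⟩, fun i => y ⟨i, (hR i).2 (.inr i.2)⟩)
  left_inv x :=
    Prod.ext (funext fun i => dif_pos i.2) (funext fun i => dif_neg fun hi => hPQ i hi i.2)
  right_inv y := by
    funext i
    by_cases hi : P i <;> simp [hi]

theorem piSubtypeGlue_swap [DecidablePred Q] (hPQ : ∀ i, P i → ¬Q i) (hR : ∀ i, R i ↔ P i ∨ Q i)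
    (x : (∀ i : {i // Q i}, α i) × (∀ i : {i // P i}, α i)) :
    piSubtypeGlue hPQ hR x.swap =
      piSubtypeGlue (fun i hQ hP => hPQ i hP hQ) (fun i => (hR i).trans or_comm) x := by
  funext i
  have := hPQ i
  have := (hR i).1 i.2
  by_cases hP : P i <;> simp_all [piSubtypeGlue]

end Glue

section Marginals

variable {N : ℕ} {α : Fin N → Type*} [∀ i, Fintype (α i)]
  {R S T : Finset (Fin N)} {ω : Matrix (∀ i, α i) (∀ i, α i) ℂ}

theorem marg_eq_ptraceRight (S : Finset (Fin N)) (ω : Matrix (∀ i, α i) (∀ i, α i) ℂ) :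
    marg S ω = ptraceRight (ω.submatrix (Equiv.piEquivPiSubtypeProd (· ∈ S) α).symm
      (Equiv.piEquivPiSubtypeProd (· ∈ S) α).symm) :=
  rfl

theorem posSemidef_marg (hω : ω.PosSemidef) (S : Finset (Fin N)) : (marg S ω).PosSemidef :=
  marg_eq_ptraceRight S ω ▸ posSemidef_ptraceRight (hω.submatrix _)

theorem ptraceRight_marg_glue (hST : ∀ i, i ∈ S → i ∉ T) (hR : ∀ i, i ∈ R ↔ i ∈ S ∨ i ∈ T) :
    ptraceRight ((marg R ω).submatrix (piSubtypeGlue hST hR) (piSubtypeGlue hST hR)) =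
      marg S ω := by
  have hTR (i) (hi : i ∈ T) : ¬i ∉ R := not_not.2 ((hR i).2 (.inr hi))
  have hS (i) : i ∉ S ↔ i ∈ T ∨ i ∉ R := by grind
  ext p q
  simp only [ptraceRight, marg, of_apply, submatrix_apply]
  rw [← Fintype.sum_prod_type', ← (piSubtypeGlue hTR hS).sum_comp]
  refine Finset.sum_congr rfl fun g _ => ?_
  congr 1 <;> funext i <;> by_cases hiS : i ∈ S <;> by_cases hiT : i ∈ T <;>
    simp [piSubtypeGlue, hR, hiS, hiT]

theorem ptraceLeft_marg_glue (hST : ∀ i, i ∈ S → i ∉ T) (hR : ∀ i, i ∈ R ↔ i ∈ S ∨ i ∈ T) :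
    ptraceLeft ((marg R ω).submatrix (piSubtypeGlue hST hR) (piSubtypeGlue hST hR)) =
      marg T ω := by
  rw [ptraceLeft_eq_ptraceRight_swap, submatrix_submatrix,
    ← ptraceRight_marg_glue (fun i hT hS => hST i hS hT) fun i => (hR i).trans or_comm]
  congr 2 <;> exact funext (piSubtypeGlue_swap hST hR)

variable [∀ i, DecidableEq (α i)]

theorem vnEnt_marg_empty (ω : Matrix (∀ i, α i) (∀ i, α i) ℂ) : vnEnt (marg ∅ ω) = 0 :=
  have : IsEmpty {i : Fin N // i ∈ (∅ : Finset (Fin N))} := ⟨fun i => Finset.notMem_empty _ i.2⟩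
  vnEnt_of_subsingleton _

theorem abs_vnEnt_marg_union_sub_le (hω : ω.PosSemidef) (h : Disjoint S T) :
    |vnEnt (marg (S ∪ T) ω) - vnEnt (marg T ω)| ≤ vnEnt (marg S ω) := by
  have hST (i) (hi : i ∈ S) : i ∉ T := Finset.disjoint_left.1 h hi
  have hR (i) : i ∈ S ∪ T ↔ i ∈ S ∨ i ∈ T := Finset.mem_union
  have hmarg := posSemidef_marg hω (S ∪ T)
  have h := abs_vnEnt_sub_vnEnt_ptraceLeft_le (hmarg.submatrix (piSubtypeGlue hST hR))
  rwa [ptraceRight_marg_glue, ptraceLeft_marg_glue, vnEnt_submatrix_equiv hmarg.1] at h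

end Marginals

section InteractionInformation

theorem sum_powerset_neg_one_pow_card_mul {ι R : Type*} [DecidableEq ι] [Ring R] {s : Finset ι}
    {i : ι} (hi : i ∈ s) (f : Finset ι → R) :
    ∑ S ∈ s.powerset, (-1) ^ S.card * f S =
      -∑ S ∈ (s.erase i).powerset, (-1) ^ S.card * (f (insert i S) - f S) := by
  conv_lhs => rw [← Finset.insert_erase hi]
  rw [Finset.sum_powerset_insert (Finset.notMem_erase i s), ← Finset.sum_add_distrib,
    ← Finset.sum_neg_distrib]
  refine Finset.sum_congr rfl fun S hS => ?_
  have hiS : i ∉ S := fun h => Finset.notMem_erase i s (Finset.mem_powerset.1 hS h)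
  rw [Finset.card_insert_of_notMem hiS, pow_succ]
  noncomm_ring

variable {N : ℕ} {α : Fin N → Type*} [∀ i, Fintype (α i)] [∀ i, DecidableEq (α i)]

theorem interInfo_eq_neg_sum_powerset (ω : Matrix (∀ i, α i) (∀ i, α i) ℂ) :
    interInfo ω = -∑ S ∈ Finset.univ.powerset, (-1 : ℝ) ^ S.card * vnEnt (marg S ω) := by
  refine congrArg Neg.neg (Finset.sum_filter_of_ne fun S _ hS => ?_)
  by_contra hne
  rw [Finset.not_nonempty_iff_eq_empty.1 hne, vnEnt_marg_empty, mul_zero] at hS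
  exact hS rfl

theorem interInfo_eq_sum_vnEnt_sub (ω : Matrix (∀ i, α i) (∀ i, α i) ℂ) (i : Fin N) :
    interInfo ω = ∑ S ∈ (Finset.univ.erase i).powerset,
      (-1 : ℝ) ^ S.card * (vnEnt (marg ({i} ∪ S) ω) - vnEnt (marg S ω)) := by
  rw [interInfo_eq_neg_sum_powerset,
    sum_powerset_neg_one_pow_card_mul (Finset.mem_univ i) fun S => vnEnt (marg S ω), neg_neg]
  rfl

theorem abs_interInfo_le_vnEnt_marg_singleton {ω : Matrix (∀ i, α i) (∀ i, α i) ℂ}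
    (hω : ω.PosSemidef) (i : Fin N) : |interInfo ω| ≤ 2 ^ (N - 1) * vnEnt (marg {i} ω) := by
  rw [interInfo_eq_sum_vnEnt_sub ω i]
  calc |∑ S ∈ (Finset.univ.erase i).powerset,
          (-1 : ℝ) ^ S.card * (vnEnt (marg ({i} ∪ S) ω) - vnEnt (marg S ω))|
      ≤ ∑ S ∈ (Finset.univ.erase i).powerset,
          |(-1 : ℝ) ^ S.card * (vnEnt (marg ({i} ∪ S) ω) - vnEnt (marg S ω))| :=
        Finset.abs_sum_le_sum_abs _ _
    _ ≤ ∑ _S ∈ (Finset.univ.erase i).powerset, vnEnt (marg {i} ω) := by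
        refine Finset.sum_le_sum fun S hS => ?_
        have hiS : i ∉ S := fun h => Finset.notMem_erase i _ (Finset.mem_powerset.1 hS h)
        rw [abs_mul, abs_neg_one_pow, one_mul]
        exact abs_vnEnt_marg_union_sub_le hω (Finset.disjoint_singleton_left.2 hiS)
    _ = 2 ^ (N - 1) * vnEnt (marg {i} ω) := by simp

theorem interInfo_abs_le_general (hN : 0 < N) {ω : Matrix (∀ i, α i) (∀ i, α i) ℂ}
    (hω : ω.PosSemidef) : |interInfo ω| ≤ 2 ^ (N - 1) * ⨅ i : Fin N, vnEnt (marg {i} ω) := by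
  have : Nonempty (Fin N) := ⟨⟨0, hN⟩⟩
  rw [Real.mul_iInf_of_nonneg (by positivity)]
  exact le_ciInf (abs_interInfo_le_vnEnt_marg_singleton hω)

end InteractionInformation

/-- The interaction information satisfies
`|I_N(ω)| ≤ 2^{N−1} · min_i H(ω_{A_i})`. -/
theorem interInfo_abs_le {N : ℕ} {α : Fin N → Type*}
    [∀ i, Fintype (α i)] [∀ i, DecidableEq (α i)] (hN : 0 < N)
    (ω : Matrix (∀ i, α i) (∀ i, α i) ℂ) (hω : IsState ω) :
    |interInfo ω| ≤ 2 ^ (N - 1) * ⨅ i : Fin N, vnEnt (marg {i} ω) :=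
  interInfo_abs_le_general hN hω.1
end
end
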